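/- Let X be a geodesic metric space. Suppose that for every ν>0 there exists s₀>0 such that every Lipschitz loop γ in X with length(γ) ≥ s₀ bounds a singular Lipschitz disc of area at most ν·length(γ)² in L^∞(X). Then X is Gromov hyperbolic. (No further assumption, such as admissibility, is made on X.) -/

import Mathlib

open scoped NNReal ENNReal
open MeasureTheory Filter

universe u v

namespace SharpIsop

/-- The closed unit disc `D² ⊂ ℝ²`. -/
def D2 : Set (ℝ × ℝ) := {p | p.1 ^ 2 + p.2 ^ 2 ≤ 1}

/-- The length (total variation over `[0,1]`) of a curve `γ : [0,1] → X`. -/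
noncomputable def loopLength {X : Type u} [PseudoEMetricSpace X] (γ : ℝ → X) : ℝ :=
  (eVariationOn γ (Set.Icc 0 1)).toReal

/-- A Lipschitz loop in `X`: a Lipschitz map `γ : [0,1] → X` with `γ 0 = γ 1`. -/
def IsLipLoop {X : Type u} [PseudoEMetricSpace X] (γ : ℝ → X) : Prop :=
  (∃ K : ℝ≥0, LipschitzOnWith K γ (Set.Icc 0 1)) ∧ γ 0 = γ 1

/-- The metric (directional) derivative of `φ : ℝ² → X` at `x` in direction `v`,
defined via a `limsup` so that it is everywhere defined (and agrees a.e. with the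
limit when the latter exists). -/
noncomputable def mder {X : Type u} [PseudoMetricSpace X] (φ : ℝ × ℝ → X)
    (x v : ℝ × ℝ) : ℝ :=
  Filter.limsup (fun r : ℝ => dist (φ (x + r • v)) (φ x) / r) (nhdsWithin 0 (Set.Ioi 0))

/-- The Jacobian of a (semi)norm `s` on `ℝ²`:  `π / Leb²({v : s v ≤ 1})` if this set
has finite measure, `0` otherwise. -/
noncomputable def jac2 (s : ℝ × ℝ → ℝ) : ℝ :=
  if volume {v : ℝ × ℝ | s v ≤ 1} < ⊤ then
    Real.pi / (volume {v : ℝ × ℝ | s v ≤ 1}).toReal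
  else 0

/-- The parametrized (Hausdorff) area of a map `φ : D² → X`. -/
noncomputable def lipArea {X : Type u} [PseudoMetricSpace X] (φ : ℝ × ℝ → X) : ℝ :=
  ∫ x in D2, jac2 (mder φ x)

/-- `φ : D² → X` is a singular Lipschitz disc bounding the loop `γ : [0,1] → X`. -/
def BoundsLoop {X : Type u} [PseudoMetricSpace X] (φ : ℝ × ℝ → X) (γ : ℝ → X) : Prop :=
  (∃ K : ℝ≥0, LipschitzOnWith K φ D2) ∧
    ∀ s ∈ Set.Icc (0:ℝ) 1, φ (Real.cos (2 * Real.pi * s), Real.sin (2 * Real.pi * s)) = γ s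

/-- `g : [0, d x y] → X` is a geodesic from `x` to `y`. -/
def IsGeodesicSeg {X : Type u} [MetricSpace X] (x y : X) (g : ℝ → X) : Prop :=
  g 0 = x ∧ g (dist x y) = y ∧
    ∀ s ∈ Set.Icc (0:ℝ) (dist x y), ∀ t ∈ Set.Icc (0:ℝ) (dist x y),
      dist (g s) (g t) = |s - t|

/-- A geodesic metric space: any two points are joined by a geodesic. -/
def GeodesicSpace (X : Type u) [MetricSpace X] : Prop :=
  ∀ x y : X, ∃ g : ℝ → X, IsGeodesicSeg x y g

/-- Gromov hyperbolicity via δ-slim geodesic triangles. -/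
def GromovHyperbolic (X : Type u) [MetricSpace X] : Prop :=
  ∃ δ : ℝ, 0 ≤ δ ∧
    ∀ x y z : X, ∀ gxy gyz gzx : ℝ → X,
      IsGeodesicSeg x y gxy → IsGeodesicSeg y z gyz → IsGeodesicSeg z x gzx →
      ∀ s ∈ Set.Icc (0:ℝ) (dist x y),
        ∃ p ∈ gyz '' Set.Icc (0:ℝ) (dist y z) ∪ gzx '' Set.Icc (0:ℝ) (dist z x),
          dist (gxy s) p ≤ δ

/-- `L^∞(X)`: the Banach space of bounded real functions on `X` with sup norm. -/
abbrev Linfty (X : Type u) : Type u := lp (fun _ : X => ℝ) ⊤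

/-- The Kuratowski embedding `x ↦ d(x,·) − d(x₀,·)` of `X` into `L^∞(X)`. -/
noncomputable def kuratowski (X : Type u) [MetricSpace X] (x₀ : X) (x : X) : Linfty X :=
  ⟨fun y => dist x y - dist x₀ y, memℓp_infty ⟨dist x x₀, by
    rintro t ⟨y, rfl⟩
    simpa [Real.norm_eq_abs] using abs_dist_sub_le x x₀ y⟩⟩

/-- `Y` admits a quadratic isoperimetric inequality for curves (with singular
Lipschitz discs as fillings). -/
def QuadIsopSpace (Y : Type u) [MetricSpace Y] : Prop :=
  ∃ C > (0:ℝ), ∀ c : ℝ → Y, IsLipLoop c →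
    ∃ φ : ℝ × ℝ → Y, BoundsLoop φ c ∧ lipArea φ ≤ C * (loopLength c) ^ 2

/-- `X` admits a disc-thickening with a quadratic isoperimetric inequality. -/
def HasDiscThickeningQII (X : Type u) [MetricSpace X] : Prop :=
  ∃ (X' : Type u) (m : MetricSpace X') (ι : X → X'),
    letI := m
    CompleteSpace X' ∧ Isometry ι ∧
      EMetric.hausdorffEdist (Set.range ι) (Set.univ : Set X') ≠ ⊤ ∧
      QuadIsopSpace X'

open Set Metric Topology
open scoped Real Interval

/-!
If `X` is not hyperbolic, some geodesic triangle is fat at an arbitrarily large scale `D` but no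
triangle of at most the same perimeter is fat at scale `2 * D`. Near its fattest point this triangle
yields a closed curve of length `≲ D` which runs along a geodesic through a point `p` and returns
far from `p`. In any metric space such a loop spans area `≳ D ^ 2`: by Stokes' formula the integral
of `f dg` along the loop, for `1`-Lipschitz functions `f` and `g`, is at most `4 / π` times the area
of a disc that it bounds, and for `f = max (D - dist · p) 0` and `g` the distance from the start of
the geodesic this integral equals `D ^ 2`. Hence the isoperimetric constant at large scale cannot be
small.
-/

/-! ### Geodesic segments and short detours -/

section Detour

variable {X : Type u}

/-- The concatenation of a curve `β` defined on `[0, l]` and a curve `β'` starting at time `0`. -/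
noncomputable def concat (l : ℝ) (β β' : ℝ → X) (t : ℝ) : X :=
  if t ≤ l then β t else β' (t - l)

lemma concat_of_le {l t : ℝ} (β β' : ℝ → X) (ht : t ≤ l) : concat l β β' t = β t :=
  if_pos ht

lemma concat_of_ge {l t : ℝ} {β β' : ℝ → X} (h : β l = β' 0) (ht : l ≤ t) :
    concat l β β' t = β' (t - l) := by
  rcases ht.eq_or_lt with rfl | ht
  · rw [concat_of_le β β' le_rfl, h, sub_self]
  · exact if_neg ht.not_ge

lemma lipschitzOnWith_concat [PseudoMetricSpace X] {K : ℝ≥0} {l m : ℝ} {β β' : ℝ → X}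
    (hβ : LipschitzOnWith K β (Icc 0 l)) (hβ' : LipschitzOnWith K β' (Icc 0 m))
    (h : β l = β' 0) : LipschitzOnWith K (concat l β β') (Icc 0 (l + m)) := by
  refine LipschitzOnWith.of_dist_le_mul fun s hs t ht => ?_
  wlog hst : s ≤ t generalizing s t
  · rw [dist_comm, dist_comm s]
    exact this t ht s hs (le_of_not_ge hst)
  rcases le_total t l with htl | hlt
  · rw [concat_of_le β β' htl, concat_of_le β β' (hst.trans htl)]
    exact hβ.dist_le_mul s ⟨hs.1, hst.trans htl⟩ t ⟨ht.1, htl⟩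
  have ht' : t - l ∈ Icc 0 m := ⟨by linarith, by linarith [ht.2]⟩
  rw [concat_of_ge h hlt]
  rcases le_total s l with hsl | hls
  · rw [concat_of_le β β' hsl]
    calc dist (β s) (β' (t - l)) ≤ dist (β s) (β l) + dist (β' 0) (β' (t - l)) := by
          rw [← h]; exact dist_triangle _ _ _
      _ ≤ K * dist s l + K * dist 0 (t - l) := by
          gcongr
          · exact hβ.dist_le_mul s ⟨hs.1, hsl⟩ l ⟨hs.1.trans hsl, le_rfl⟩
          · exact hβ'.dist_le_mul 0 ⟨le_rfl, ht'.1.trans ht'.2⟩ _ ht'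
      _ = K * dist s t := by
          rw [dist_comm s, dist_comm 0, dist_comm s, Real.dist_eq, Real.dist_eq, Real.dist_eq,
            abs_of_nonneg (by linarith), abs_of_nonneg (by linarith [ht'.1]),
            abs_of_nonneg (by linarith)]
          ring
  · rw [concat_of_ge h hls]
    simpa [Real.dist_eq] using
      hβ'.dist_le_mul (s - l) ⟨by linarith, by linarith [hs.2]⟩ (t - l) ht'

/-- `a` and `b` are joined inside `S` by a curve of length at most `L`, given as a `1`-Lipschitz
map on an interval of length at most `L`. -/
def JoinedWithin [PseudoMetricSpace X] (S : Set X) (L : ℝ) (a b : X) : Prop :=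
  ∃ l : ℝ, 0 ≤ l ∧ l ≤ L ∧ ∃ β : ℝ → X, LipschitzOnWith 1 β (Icc 0 l) ∧ β 0 = a ∧ β l = b ∧
    MapsTo β (Icc 0 l) S

section JoinedWithin

variable [PseudoMetricSpace X] {S T : Set X} {L M : ℝ} {a b c : X}

lemma JoinedWithin.refl (ha : a ∈ S) (hL : 0 ≤ L) : JoinedWithin S L a a :=
  ⟨0, le_rfl, hL, fun _ => a, (LipschitzWith.const' a).lipschitzOnWith, rfl, rfl, fun _ _ => ha⟩

lemma JoinedWithin.mono (h : JoinedWithin S L a b) (hST : S ⊆ T) (hLM : L ≤ M) :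
    JoinedWithin T M a b := by
  obtain ⟨l, hl, hlL, β, hβ, h0, h1, hS⟩ := h
  exact ⟨l, hl, hlL.trans hLM, β, hβ, h0, h1, hS.mono_right hST⟩

lemma JoinedWithin.symm (h : JoinedWithin S L a b) : JoinedWithin S L b a := by
  obtain ⟨l, hl, hlL, β, hβ, h0, h1, hS⟩ := h
  have hmaps : MapsTo (fun t => l - t) (Icc 0 l) (Icc 0 l) := fun t ht =>
    ⟨by linarith [ht.2], by linarith [ht.1]⟩
  refine ⟨l, hl, hlL, fun t => β (l - t), ?_, by simpa using h1, by simpa using h0,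
    hS.comp hmaps⟩
  refine LipschitzOnWith.of_dist_le_mul fun s hs t ht => ?_
  simpa only [dist_sub_left] using hβ.dist_le_mul _ (hmaps hs) _ (hmaps ht)

lemma JoinedWithin.trans (h : JoinedWithin S L a b) (h' : JoinedWithin S M b c) :
    JoinedWithin S (L + M) a c := by
  obtain ⟨l, hl, hlL, β, hβ, h0, h1, hS⟩ := h
  obtain ⟨m, hm, hmM, β', hβ', h0', h1', hS'⟩ := h'
  have hglue : β l = β' 0 := h1.trans h0'.symm
  refine ⟨l + m, by positivity, by gcongr, concat l β β', lipschitzOnWith_concat hβ hβ' hglue,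
    by rw [concat_of_le β β' hl, h0], by rw [concat_of_ge hglue (by linarith)]; simpa using h1',
    fun t ht => ?_⟩
  rcases le_total t l with htl | hlt
  · rw [concat_of_le β β' htl]
    exact hS ⟨ht.1, htl⟩
  · rw [concat_of_ge hglue hlt]
    exact hS' ⟨by linarith, by linarith [ht.2]⟩

end JoinedWithin

variable [MetricSpace X] {x y z a b p : X} {S : Set X}

/-- `S` is the image of a geodesic from `x` to `y`. -/
def IsSegment (x y : X) (S : Set X) : Prop :=
  ∃ g : ℝ → X, IsGeodesicSeg x y g ∧ g '' Icc 0 (dist x y) = S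

lemma GeodesicSpace.exists_isSegment (hX : GeodesicSpace X) (x y : X) : ∃ S, IsSegment x y S :=
  (hX x y).imp' _ fun g hg => ⟨g, hg, rfl⟩

lemma IsGeodesicSeg.lipschitzOnWith {g : ℝ → X} (hg : IsGeodesicSeg x y g) :
    LipschitzOnWith 1 g (Icc 0 (dist x y)) :=
  LipschitzOnWith.of_dist_le_mul fun s hs t ht => by
    rw [hg.2.2 s hs t ht, NNReal.coe_one, one_mul, Real.dist_eq]

lemma IsGeodesicSeg.isSegment_image {g : ℝ → X} (hg : IsGeodesicSeg x y g) {s t : ℝ}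
    (hs : 0 ≤ s) (hst : s ≤ t) (ht : t ≤ dist x y) :
    IsSegment (g s) (g t) (g '' Icc s t) := by
  have hd : dist (g s) (g t) = t - s := by
    rw [hg.2.2 s ⟨hs, hst.trans ht⟩ t ⟨hs.trans hst, ht⟩, abs_sub_comm,
      abs_of_nonneg (sub_nonneg.2 hst)]
  refine ⟨fun τ => g (s + τ), ⟨by simp, by simp [hd], fun τ hτ σ hσ => ?_⟩, ?_⟩
  · rw [hd] at hτ hσ
    rw [hg.2.2 _ ⟨by linarith [hτ.1], by linarith [hτ.2]⟩ _
      ⟨by linarith [hσ.1], by linarith [hσ.2]⟩, add_sub_add_left_eq_sub]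
  · rw [hd, ← image_image g (s + ·), image_const_add_Icc, add_zero, add_sub_cancel]

namespace IsSegment

lemma symm (h : IsSegment x y S) : IsSegment y x S := by
  obtain ⟨g, ⟨h0, h1, hg⟩, rfl⟩ := h
  have hmem : ∀ t ∈ Icc 0 (dist x y), dist x y - t ∈ Icc 0 (dist x y) := fun t ht =>
    ⟨by linarith [ht.2], by linarith [ht.1]⟩
  refine ⟨fun t => g (dist x y - t), ⟨by simpa using h1, by simpa [dist_comm y x] using h0,
    fun s hs t ht => ?_⟩, ?_⟩
  · rw [dist_comm y x] at hs ht
    rw [hg _ (hmem s hs) _ (hmem t ht), sub_sub_sub_cancel_left, abs_sub_comm]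
  · rw [dist_comm y x, ← image_image g (dist x y - ·), image_const_sub_Icc, sub_self, sub_zero]

lemma left_mem (h : IsSegment x y S) : x ∈ S := by
  obtain ⟨g, hg, rfl⟩ := h
  exact ⟨0, ⟨le_rfl, dist_nonneg⟩, hg.1⟩

lemma right_mem (h : IsSegment x y S) : y ∈ S := h.symm.left_mem

lemma dist_add_dist (h : IsSegment x y S) (ha : a ∈ S) : dist x a + dist a y = dist x y := by
  obtain ⟨g, ⟨h0, h1, hg⟩, rfl⟩ := h
  obtain ⟨t, ht, rfl⟩ := ha
  have hxt := hg 0 ⟨le_rfl, dist_nonneg⟩ t ht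
  have hty := hg t ht _ ⟨dist_nonneg, le_rfl⟩
  rw [h0, zero_sub, abs_neg, abs_of_nonneg ht.1] at hxt
  rw [h1, abs_sub_comm, abs_of_nonneg (sub_nonneg.2 ht.2)] at hty
  rw [hxt, hty, add_sub_cancel]

lemma exists_isSegment_subset (h : IsSegment x y S) (ha : a ∈ S) (hb : b ∈ S) :
    ∃ T ⊆ S, IsSegment a b T := by
  obtain ⟨g, hg, rfl⟩ := h
  obtain ⟨s, hs, rfl⟩ := ha
  obtain ⟨t, ht, rfl⟩ := hb
  rcases le_total s t with hst | hts
  · exact ⟨_, image_mono (Icc_subset_Icc hs.1 ht.2), hg.isSegment_image hs.1 hst ht.2⟩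
  · exact ⟨_, image_mono (Icc_subset_Icc ht.1 hs.2), (hg.isSegment_image ht.1 hts hs.2).symm⟩

lemma exists_dist_eq (h : IsSegment x y S) {r : ℝ} (hr : 0 ≤ r) (hr' : r ≤ dist x y) :
    ∃ a ∈ S, dist x a = r := by
  obtain ⟨g, hg, rfl⟩ := h
  refine ⟨g r, ⟨r, ⟨hr, hr'⟩, rfl⟩, ?_⟩
  have hdist := hg.2.2 0 ⟨le_rfl, dist_nonneg⟩ r ⟨hr, hr'⟩
  rwa [hg.1, zero_sub, abs_neg, abs_of_nonneg hr] at hdist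

lemma exists_isSegment_around (h : IsSegment x y S) (hp : p ∈ S) {r : ℝ} (hr : 0 ≤ r) :
    ∃ a b T, T ⊆ S ∧ IsSegment a b T ∧ p ∈ T ∧ dist a p ≤ r ∧ dist p b ≤ r ∧
      (a = x ∨ dist a p = r) ∧ (b = y ∨ dist p b = r) := by
  obtain ⟨g, hg, rfl⟩ := h
  obtain ⟨s, hs, rfl⟩ := hp
  have ha : max 0 (s - r) ∈ Icc 0 (dist x y) :=
    ⟨le_max_left _ _, max_le dist_nonneg (by linarith [hs.2])⟩
  have hb : min (dist x y) (s + r) ∈ Icc 0 (dist x y) :=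
    ⟨le_min dist_nonneg (by linarith [hs.1]), min_le_left _ _⟩
  have has : max 0 (s - r) ≤ s := max_le hs.1 (by linarith)
  have hsb : s ≤ min (dist x y) (s + r) := le_min hs.2 (by linarith)
  have hap : dist (g (max 0 (s - r))) (g s) = s - max 0 (s - r) := by
    rw [hg.2.2 _ ha _ hs, abs_sub_comm, abs_of_nonneg (sub_nonneg.2 has)]
  have hpb : dist (g s) (g (min (dist x y) (s + r))) = min (dist x y) (s + r) - s := by
    rw [hg.2.2 _ hs _ hb, abs_sub_comm, abs_of_nonneg (sub_nonneg.2 hsb)]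
  refine ⟨_, _, _, image_mono (Icc_subset_Icc ha.1 hb.2),
    hg.isSegment_image ha.1 (has.trans hsb) hb.2, ⟨s, ⟨has, hsb⟩, rfl⟩, ?_, ?_, ?_, ?_⟩
  · linarith [le_max_right 0 (s - r)]
  · linarith [min_le_right (dist x y) (s + r)]
  · refine (max_choice 0 (s - r)).imp (fun h => by rw [h, hg.1]) fun h => ?_
    rw [hap, h, sub_sub_cancel]
  · refine (min_choice (dist x y) (s + r)).imp (fun h => by rw [h, hg.2.1]) fun h => ?_
    rw [hpb, h, add_sub_cancel_left]

lemma joinedWithin (h : IsSegment x y S) {T : Set X} (hST : S ⊆ T) {L : ℝ} (hL : dist x y ≤ L) :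
    JoinedWithin T L x y := by
  obtain ⟨g, hg, rfl⟩ := h
  exact ⟨dist x y, dist_nonneg, hL, g, hg.lipschitzOnWith, hg.1, hg.2.1,
    (mapsTo_image g _).mono_right hST⟩

end IsSegment

lemma perimeter_le {u v : X} {T : Set X} (hS : IsSegment z u S) (hT : IsSegment z v T)
    (ha : a ∈ S) (hb : b ∈ T) :
    dist z a + dist a b + dist b z ≤ dist z u + dist u v + dist v z := by
  have hau := hS.dist_add_dist ha
  have hbv := hT.dist_add_dist hb
  have htri := dist_triangle4 a u v b
  rw [dist_comm b z, dist_comm v z]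
  rw [dist_comm v b] at htri
  linarith

variable (X) in
/-- Some geodesic triangle of perimeter at most `R` has a point on one side at distance at least
`D` from the two other sides. -/
def HasFatTriangle (R D : ℝ) : Prop :=
  ∃ (x y z p : X) (S₁ S₂ S₃ : Set X), IsSegment x y S₁ ∧ IsSegment y z S₂ ∧ IsSegment z x S₃ ∧
    dist x y + dist y z + dist z x ≤ R ∧ p ∈ S₁ ∧ ∀ q ∈ S₂ ∪ S₃, D ≤ dist p q

lemma exists_hasFatTriangle_of_not_gromovHyperbolic (h : ¬GromovHyperbolic X) {δ : ℝ}
    (hδ : 0 ≤ δ) : ∃ R, HasFatTriangle X R δ := by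
  contrapose! h
  refine ⟨δ, hδ, fun x y z gxy gyz gzx hxy hyz hzx s hs => ?_⟩
  by_contra! hfar
  exact h _ ⟨x, y, z, gxy s, _, _, _, ⟨gxy, hxy, rfl⟩, ⟨gyz, hyz, rfl⟩, ⟨gzx, hzx, rfl⟩, le_rfl,
    mem_image_of_mem _ hs, fun q hq => (hfar q hq).le⟩

lemma HasFatTriangle.le {R D : ℝ} (h : HasFatTriangle X R D) : D ≤ R := by
  obtain ⟨x, y, z, p, S₁, S₂, S₃, h₁, h₂, _, hR, hp, hfar⟩ := h
  have hpy : D ≤ dist p y := hfar y (.inl h₂.left_mem)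
  have hxy := h₁.dist_add_dist hp
  linarith [dist_nonneg (x := x) (y := p), dist_nonneg (x := y) (y := z),
    dist_nonneg (x := z) (y := x)]

/-- The fatness of triangles of perimeter at most `R` is bounded by `R`, so repeatedly doubling it
must stop. -/
lemma HasFatTriangle.exists_not_two_mul {R δ : ℝ} (h : HasFatTriangle X R δ) (hδ : 0 < δ) :
    ∃ D ≥ δ, HasFatTriangle X R D ∧ ¬HasFatTriangle X R (2 * D) := by
  by_contra! hdouble
  have hpow : ∀ n : ℕ, HasFatTriangle X R (2 ^ n * δ) := by
    intro n
    induction n with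
    | zero => simpa using h
    | succ n ih =>
      rw [pow_succ', mul_assoc]
      exact hdouble _ (le_mul_of_one_le_left hδ.le (one_le_pow₀ one_le_two)) ih
  obtain ⟨n, hn⟩ := pow_unbounded_of_one_lt (R / δ) one_lt_two
  exact ((div_lt_iff₀ hδ).1 hn).not_ge (hpow n).le

lemma exists_dist_lt_of_not_hasFatTriangle {R E : ℝ} {S₁ S₂ S₃ : Set X}
    (h : ¬HasFatTriangle X R E) (h₁ : IsSegment x y S₁) (h₂ : IsSegment y z S₂)
    (h₃ : IsSegment z x S₃) (hR : dist x y + dist y z + dist z x ≤ R) (hp : p ∈ S₁) :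
    ∃ q ∈ S₂ ∪ S₃, dist p q < E := by
  by_contra! hfar
  exact h ⟨x, y, z, p, S₁, S₂, S₃, h₁, h₂, h₃, hR, hp, hfar⟩

lemma joinedWithin_of_dist_le (hX : GeodesicSpace X) {r L : ℝ} (hr : r + L ≤ dist p a)
    (hab : dist a b ≤ L) : JoinedWithin {q | r ≤ dist p q} L a b := by
  obtain ⟨T, hT⟩ := hX.exists_isSegment a b
  refine hT.joinedWithin (fun q hq => ?_) hab
  have hadd := hT.dist_add_dist hq
  have htri := dist_triangle_right p a q
  change r ≤ dist p q
  linarith [dist_nonneg (x := q) (y := b)]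

lemma exists_joinedWithin_transversal (hX : GeodesicSpace X) {D : ℝ} (hD : 0 ≤ D) {F : Set X}
    (hF : ∀ q ∈ F, D ≤ dist p q) (ha : a ∈ F ∨ 3 * D ≤ dist p a)
    (hq : ∃ q ∈ F, dist a q ≤ 2 * D) :
    ∃ q ∈ F, dist a q ≤ 2 * D ∧ JoinedWithin {q | D ≤ dist p q} (2 * D) a q := by
  rcases ha with ha | ha
  · exact ⟨a, ha, by simpa using hD, .refl (hF a ha) (by positivity)⟩
  · obtain ⟨q, hqF, haq⟩ := hq
    exact ⟨q, hqF, haq, joinedWithin_of_dist_le hX (by linarith) haq⟩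

/-- Two sides of a thin triangle either are short or come close to each other at distance `13 * D`
from the third side `[a, b]`; there one can cross from one to the other far away from `p`. -/
lemma joinedWithin_corner (hX : GeodesicSpace X) {R D : ℝ}
    (hthin : ¬HasFatTriangle X R (2 * D)) {S₁ S₂ : Set X} (h₁ : IsSegment z a S₁)
    (h₂ : IsSegment z b S₂) (hR : dist z a + dist a b + dist b z ≤ R)
    (hS₁ : S₁ ⊆ {q | D ≤ dist p q}) (hS₂ : S₂ ⊆ {q | D ≤ dist p q})
    (hab : dist a b ≤ 10 * D) (hpa : dist p a ≤ 5 * D) :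
    JoinedWithin {q | D ≤ dist p q} (40 * D) a b := by
  have hD : 0 ≤ D := by linarith [dist_nonneg (x := a) (y := b)]
  rcases le_total (dist z a) (13 * D) with hza | hza
  · have hzb : dist z b ≤ 23 * D := by linarith [dist_triangle z a b]
    exact ((h₁.joinedWithin hS₁ hza).symm.trans (h₂.joinedWithin hS₂ hzb)).mono subset_rfl
      (by linarith)
  obtain ⟨w, hw, haw⟩ := h₁.symm.exists_dist_eq (r := 13 * D) (by positivity)
    (by rwa [dist_comm])
  obtain ⟨H, hH⟩ := hX.exists_isSegment a b
  obtain ⟨w', hw', hww'⟩ := exists_dist_lt_of_not_hasFatTriangle hthin h₁ hH h₂.symm hR hw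
  have hw'S₂ : w' ∈ S₂ := by
    refine hw'.resolve_left fun hw'H => ?_
    have hadd := hH.dist_add_dist hw'H
    linarith [dist_triangle_right a w w', dist_nonneg (x := w') (y := b)]
  obtain ⟨T₁, hT₁, haT₁⟩ := h₁.exists_isSegment_subset h₁.right_mem hw
  obtain ⟨T₂, hT₂, hbT₂⟩ := h₂.exists_isSegment_subset hw'S₂ h₂.right_mem
  have hpw : 8 * D ≤ dist p w := by linarith [dist_triangle_left a w p]
  have hw'b : dist w' b ≤ 25 * D := by
    linarith [dist_triangle4 w' w a b, dist_comm w w', dist_comm w a]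
  exact (((haT₁.joinedWithin (hT₁.trans hS₁) haw.le).trans
    (joinedWithin_of_dist_le hX (by linarith) hww'.le)).trans
      (hbT₂.joinedWithin (hT₂.trans hS₂) hw'b)).mono subset_rfl (by linarith)

lemma joinedWithin_legs (hX : GeodesicSpace X) {R D : ℝ}
    (hthin : ¬HasFatTriangle X R (2 * D)) {S₂ S₃ : Set X} (h₂ : IsSegment y z S₂)
    (h₃ : IsSegment z x S₃) (hR : dist x y + dist y z + dist z x ≤ R)
    (hfar : S₂ ∪ S₃ ⊆ {q | D ≤ dist p q}) (ha : a ∈ S₂ ∪ S₃) (hb : b ∈ S₂ ∪ S₃)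
    (hab : dist a b ≤ 10 * D) (hpa : dist p a ≤ 5 * D) (hpb : dist p b ≤ 5 * D) :
    JoinedWithin {q | D ≤ dist p q} (40 * D) a b := by
  have hD : 0 ≤ D := by linarith [dist_nonneg (x := a) (y := b)]
  obtain ⟨hS₂, hS₃⟩ := union_subset_iff.1 hfar
  have same_leg : ∀ {u v : X} {S : Set X}, IsSegment u v S → S ⊆ {q | D ≤ dist p q} →
      a ∈ S → b ∈ S → JoinedWithin {q | D ≤ dist p q} (40 * D) a b := by
    intro u v S hS hSfar haS hbS
    obtain ⟨T, hTS, hT⟩ := hS.exists_isSegment_subset haS hbS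
    exact hT.joinedWithin (hTS.trans hSfar) (by linarith)
  have distinct_legs : ∀ {a b : X}, a ∈ S₂ → b ∈ S₃ → dist a b ≤ 10 * D → dist p a ≤ 5 * D →
      JoinedWithin {q | D ≤ dist p q} (40 * D) a b := by
    intro a b ha hb hab hpa
    obtain ⟨T₂, hT₂, hzT₂⟩ := h₂.exists_isSegment_subset h₂.right_mem ha
    obtain ⟨T₃, hT₃, hzT₃⟩ := h₃.exists_isSegment_subset h₃.left_mem hb
    refine joinedWithin_corner hX hthin hzT₂ hzT₃ ?_ (hT₂.trans hS₂) (hT₃.trans hS₃) hab hpa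
    linarith [perimeter_le h₂.symm h₃ ha hb, dist_comm x y, dist_comm y z, dist_comm z x]
  rcases ha with ha | ha <;> rcases hb with hb | hb
  · exact same_leg h₂ hS₂ ha hb
  · exact distinct_legs ha hb hab hpa
  · exact (distinct_legs hb ha (by rwa [dist_comm]) hpb).symm
  · exact same_leg h₃ hS₃ ha hb

variable (X) in
/-- The end points of a geodesic segment of length at most `6 * D` are joined by a curve of
comparable length that stays at distance at least `D` from a point `p` of the segment. -/
def HasDetour (D : ℝ) : Prop :=
  ∃ (a b p : X) (S : Set X), IsSegment a b S ∧ p ∈ S ∧ dist a b ≤ 6 * D ∧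
    JoinedWithin {q | D ≤ dist p q} (44 * D) b a

lemma HasFatTriangle.hasDetour (hX : GeodesicSpace X) {R D : ℝ} (hD : 0 ≤ D)
    (hfat : HasFatTriangle X R D) (hthin : ¬HasFatTriangle X R (2 * D)) : HasDetour X D := by
  obtain ⟨x, y, z, p, S₁, S₂, S₃, h₁, h₂, h₃, hR, hp, hfar⟩ := hfat
  obtain ⟨a, b, T, hTS₁, hT, hpT, hap, hpb, ha, hb⟩ :=
    h₁.exists_isSegment_around hp (r := 3 * D) (by positivity)
  have transversal : ∀ c ∈ T, (c ∈ S₂ ∪ S₃ ∨ 3 * D ≤ dist p c) → ∃ q ∈ S₂ ∪ S₃,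
      dist c q ≤ 2 * D ∧ JoinedWithin {q | D ≤ dist p q} (2 * D) c q := fun c hcT hc => by
    obtain ⟨q, hq, hcq⟩ :=
      exists_dist_lt_of_not_hasFatTriangle hthin h₁ h₂ h₃ hR (hTS₁ hcT)
    exact exists_joinedWithin_transversal hX hD hfar hc ⟨q, hq, hcq.le⟩
  have ha : a ∈ S₂ ∪ S₃ ∨ 3 * D ≤ dist p a :=
    ha.imp (fun h => by rw [h]; exact .inr h₃.right_mem) fun h => by rw [dist_comm, h]
  have hb : b ∈ S₂ ∪ S₃ ∨ 3 * D ≤ dist p b :=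
    hb.imp (fun h => by rw [h]; exact .inl h₂.left_mem) Eq.ge
  obtain ⟨q, hq, haq, hjoin_a⟩ := transversal a hT.left_mem ha
  obtain ⟨q', hq', hbq', hjoin_b⟩ := transversal b hT.right_mem hb
  have hab : dist a b ≤ 6 * D := by linarith [dist_triangle a p b]
  have hjoin_legs := joinedWithin_legs hX hthin h₂ h₃ hR hfar hq' hq
    (by linarith [dist_triangle4 q' b a q, dist_comm q' b, dist_comm b a])
    (by linarith [dist_triangle p b q']) (by linarith [dist_triangle p a q, dist_comm a p])
  exact ⟨a, b, p, T, hT, hpT, hab,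
    ((hjoin_b.trans hjoin_legs).trans hjoin_a.symm).mono subset_rfl (by linarith)⟩

theorem exists_hasDetour_of_not_gromovHyperbolic (hX : GeodesicSpace X)
    (h : ¬GromovHyperbolic X) {δ : ℝ} (hδ : 0 < δ) : ∃ D ≥ δ, HasDetour X D := by
  obtain ⟨R, hR⟩ := exists_hasFatTriangle_of_not_gromovHyperbolic h hδ.le
  obtain ⟨D, hD, hfat, hthin⟩ := hR.exists_not_two_mul hδ
  exact ⟨D, hD, hfat.hasDetour hX (hδ.le.trans hD) hthin⟩

end Detour

section FatLoop

variable {E : Type u} [PseudoMetricSpace E]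

lemma eVariationOn_le_of_lipschitzOnWith {K : ℝ≥0} {γ : ℝ → E}
    (hγ : LipschitzOnWith K γ (Icc 0 1)) : eVariationOn γ (Icc 0 1) ≤ K := by
  have hid : eVariationOn (id : ℝ → ℝ) (Icc 0 1) = 1 := by
    simp
  simpa [hid] using hγ.comp_eVariationOn_le (g := id) (mapsTo_id _)

lemma loopLength_le_of_lipschitzOnWith {K : ℝ≥0} {γ : ℝ → E}
    (hγ : LipschitzOnWith K γ (Icc 0 1)) : loopLength γ ≤ K :=
  ENNReal.toReal_le_coe_of_le_coe (eVariationOn_le_of_lipschitzOnWith hγ)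

lemma dist_le_loopLength {K : ℝ≥0} {γ : ℝ → E} (hγ : LipschitzOnWith K γ (Icc 0 1)) {s t : ℝ}
    (hs : s ∈ Icc (0 : ℝ) 1) (ht : t ∈ Icc (0 : ℝ) 1) : dist (γ s) (γ t) ≤ loopLength γ := by
  rw [dist_edist]
  exact ENNReal.toReal_mono
    ((eVariationOn_le_of_lipschitzOnWith hγ).trans_lt ENNReal.coe_lt_top).ne
    (eVariationOn.edist_le γ hs ht)

/-- The closed curve `c`, `1`-Lipschitz on `[0, Λ]`, is a geodesic on `[0, l]` and stays at distance
at least `r` from the point `c t` of that geodesic during `[l, Λ]`. -/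
structure IsFatLoop (c : ℝ → E) (Λ l t r : ℝ) : Prop where
  mem_Icc : t ∈ Icc 0 l
  le : l ≤ Λ
  closed : c 0 = c Λ
  lipschitzOnWith : LipschitzOnWith 1 c (Icc 0 Λ)
  dist_eq : ∀ s ∈ Icc 0 l, ∀ s' ∈ Icc 0 l, dist (c s) (c s') = |s - s'|
  le_dist : ∀ s ∈ Icc l Λ, r ≤ dist (c s) (c t)

namespace IsFatLoop

variable {c : ℝ → E} {Λ l t r : ℝ}

lemma length_nonneg (h : IsFatLoop c Λ l t r) : 0 ≤ l := h.mem_Icc.1.trans h.mem_Icc.2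

lemma comp_isometry {F : Type v} [PseudoMetricSpace F] {ι : E → F} (h : IsFatLoop c Λ l t r)
    (hι : Isometry ι) : IsFatLoop (ι ∘ c) Λ l t r where
  mem_Icc := h.mem_Icc
  le := h.le
  closed := congrArg ι h.closed
  lipschitzOnWith := by
    simpa using hι.lipschitz.lipschitzOnWith.comp h.lipschitzOnWith (mapsTo_univ c _)
  dist_eq s hs s' hs' := (hι.dist_eq _ _).trans (h.dist_eq s hs s' hs')
  le_dist s hs := (h.le_dist s hs).trans_eq (hι.dist_eq _ _).symm

lemma le_time (h : IsFatLoop c Λ l t r) : r ≤ t := by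
  have hdist := h.le_dist Λ ⟨h.le, le_rfl⟩
  rwa [← h.closed, h.dist_eq 0 ⟨le_rfl, h.length_nonneg⟩ t h.mem_Icc, zero_sub, abs_neg,
    abs_of_nonneg h.mem_Icc.1] at hdist

lemma time_add_le (h : IsFatLoop c Λ l t r) : t + r ≤ l := by
  have hdist := h.le_dist l ⟨le_rfl, h.le⟩
  rw [h.dist_eq l ⟨h.length_nonneg, le_rfl⟩ t h.mem_Icc,
    abs_of_nonneg (sub_nonneg.2 h.mem_Icc.2)] at hdist
  linarith

lemma mul_mem_Icc (h : IsFatLoop c Λ l t r) {s : ℝ} (hs : s ∈ Icc (0 : ℝ) 1) :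
    Λ * s ∈ Icc 0 Λ := by
  have hΛ := h.length_nonneg.trans h.le
  exact ⟨mul_nonneg hΛ hs.1, mul_le_of_le_one_right hΛ hs.2⟩

lemma lipschitzOnWith_comp_mul (h : IsFatLoop c Λ l t r) :
    LipschitzOnWith Λ.toNNReal (fun s => c (Λ * s)) (Icc 0 1) :=
  LipschitzOnWith.of_dist_le_mul fun s hs s' hs' => by
    have hΛ := h.length_nonneg.trans h.le
    simpa [Real.dist_eq, ← mul_sub, abs_mul, abs_of_nonneg hΛ, hΛ] using
      h.lipschitzOnWith.dist_le_mul _ (h.mul_mem_Icc hs) _ (h.mul_mem_Icc hs')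

lemma isLipLoop (h : IsFatLoop c Λ l t r) : IsLipLoop fun s => c (Λ * s) :=
  ⟨⟨_, h.lipschitzOnWith_comp_mul⟩, by simpa using h.closed⟩

lemma loopLength_le (h : IsFatLoop c Λ l t r) : loopLength (fun s => c (Λ * s)) ≤ Λ :=
  (loopLength_le_of_lipschitzOnWith h.lipschitzOnWith_comp_mul).trans_eq
    (Real.coe_toNNReal _ (h.length_nonneg.trans h.le))

lemma two_mul_le_loopLength (h : IsFatLoop c Λ l t r) (hr : 0 < r) :
    2 * r ≤ loopLength fun s => c (Λ * s) := by
  have hl : 2 * r ≤ l := by linarith [h.le_time, h.time_add_le]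
  have hΛ : 0 < Λ := by linarith [h.le]
  have hdist := dist_le_loopLength h.lipschitzOnWith_comp_mul (left_mem_Icc.2 zero_le_one)
    (t := l / Λ) ⟨div_nonneg h.length_nonneg hΛ.le, div_le_one_of_le₀ h.le hΛ.le⟩
  rw [mul_zero, mul_div_cancel₀ l hΛ.ne', h.dist_eq 0 ⟨le_rfl, h.length_nonneg⟩ l
    ⟨h.length_nonneg, le_rfl⟩, zero_sub, abs_neg, abs_of_nonneg h.length_nonneg] at hdist
  exact hl.trans hdist

end IsFatLoop

lemma HasDetour.exists_isFatLoop {X : Type u} [MetricSpace X] {D : ℝ} (h : HasDetour X D) :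
    ∃ (c : ℝ → X) (Λ l t : ℝ), Λ ≤ 50 * D ∧ IsFatLoop c Λ l t D := by
  obtain ⟨a, b, _, _, ⟨g, hg, rfl⟩, ⟨t, ht, rfl⟩, hab, m, hm, hmD, β, hβ, hβb, hβa, hfar⟩ := h
  have hglue : g (dist a b) = β 0 := hg.2.1.trans hβb.symm
  have hgeod : ∀ s ∈ Icc 0 (dist a b), concat (dist a b) g β s = g s := fun s hs =>
    concat_of_le g β hs.2
  have hdetour : ∀ s, dist a b ≤ s → concat (dist a b) g β s = β (s - dist a b) := fun s hs =>
    concat_of_ge hglue hs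
  refine ⟨concat (dist a b) g β, dist a b + m, dist a b, t, by linarith, ht,
    le_add_of_nonneg_right hm, ?_, lipschitzOnWith_concat hg.lipschitzOnWith hβ hglue, ?_, ?_⟩
  · rw [hgeod 0 ⟨le_rfl, dist_nonneg⟩, hdetour _ (le_add_of_nonneg_right hm), hg.1,
      add_sub_cancel_left, hβa]
  · intro s hs s' hs'
    rw [hgeod s hs, hgeod s' hs', hg.2.2 s hs s' hs']
  · intro s hs
    rw [hdetour s hs.1, hgeod t ht, dist_comm]
    exact hfar ⟨by linarith [hs.1], by linarith [hs.2]⟩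

end FatLoop

/-! ### Stokes' formula for Lipschitz functions on a cylinder -/

section Stokes

variable {u v : ℝ × ℝ → ℝ} {Ku Kv : ℝ≥0} {a a' b c T h : ℝ} {x : ℝ × ℝ}

/-- The determinant of the derivative of `(u, v)`, the density of the form `du ∧ dv`. -/
noncomputable def jacobianDet (u v : ℝ × ℝ → ℝ) (x : ℝ × ℝ) : ℝ :=
  fderiv ℝ u x (1, 0) * fderiv ℝ v x (0, 1) - fderiv ℝ u x (0, 1) * fderiv ℝ v x (1, 0)

/-- The analogue of `h ^ 2 * jacobianDet u v x` with derivatives replaced by increments along the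
square of side `h` at `x`. The increments of `v` are taken on the sides away from `x`, so that sums
over a grid telescope. -/
noncomputable def discreteJacobian (u v : ℝ × ℝ → ℝ) (h : ℝ) (x : ℝ × ℝ) : ℝ :=
  (u (x.1 + h, x.2) - u x) * (v (x.1 + h, x.2 + h) - v (x.1 + h, x.2)) -
    (u (x.1, x.2 + h) - u x) * (v (x.1 + h, x.2 + h) - v (x.1, x.2 + h))

/-- The analogue of `h` times the integral of `u dv` along `{r} × [c, c + T]`. -/
noncomputable def discreteCircleIntegral (u v : ℝ × ℝ → ℝ) (h c T r : ℝ) : ℝ :=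
  ∫ θ in c..c + T, u (r, θ) * (v (r, θ + h) - v (r, θ))

lemma continuous_discreteJacobian (hu : Continuous u) (hv : Continuous v) :
    Continuous (discreteJacobian u v h) := by
  unfold discreteJacobian
  fun_prop

lemma continuous_discreteCircleIntegral (hu : Continuous u) (hv : Continuous v) :
    Continuous (discreteCircleIntegral u v h c T) := by
  refine intervalIntegral.continuous_parametric_intervalIntegral_of_continuous' ?_ _ _
  simp only [Function.uncurry_def]
  fun_prop

lemma integral_discreteJacobian_eq_sub (hu : Continuous u) (hv : Continuous v)
    (hu_per : ∀ r, Function.Periodic (fun θ => u (r, θ)) T)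
    (hv_per : ∀ r, Function.Periodic (fun θ => v (r, θ)) T) (r : ℝ) :
    ∫ θ in c..c + T, discreteJacobian u v h (r, θ) =
      discreteCircleIntegral u v h c T (r + h) - discreteCircleIntegral u v h c T r := by
  let w : ℝ → ℝ := fun θ => u (r, θ) * (v (r + h, θ) - v (r, θ))
  have hw : Continuous w := by fun_prop
  have hw_per : Function.Periodic w T := fun θ => by
    simp only [w, hu_per r θ, hv_per r θ, hv_per (r + h) θ]
  have hw_shift : ∫ θ in c..c + T, w (θ + h) = ∫ θ in c..c + T, w θ := by
    rw [intervalIntegral.integral_comp_add_right, add_right_comm]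
    exact hw_per.intervalIntegral_add_eq _ _
  let U : ℝ → ℝ → ℝ := fun r θ => u (r, θ) * (v (r, θ + h) - v (r, θ))
  have hU : ∀ r, Continuous (U r) := fun r => by fun_prop
  calc ∫ θ in c..c + T, discreteJacobian u v h (r, θ)
      = ∫ θ in c..c + T, ((w θ - w (θ + h)) + (U (r + h) θ - U r θ)) := by
        congr 1 with θ
        simp only [discreteJacobian, w, U]
        ring
    _ = (∫ θ in c..c + T, (w θ - w (θ + h))) + ∫ θ in c..c + T, (U (r + h) θ - U r θ) :=
        intervalIntegral.integral_add (Continuous.intervalIntegrable (by fun_prop) _ _)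
          (((hU _).sub (hU r)).intervalIntegrable _ _)
    _ = discreteCircleIntegral u v h c T (r + h) - discreteCircleIntegral u v h c T r := by
        rw [intervalIntegral.integral_sub (hw.intervalIntegrable _ _)
          (Continuous.intervalIntegrable (by fun_prop) _ _), hw_shift, sub_self, zero_add,
          intervalIntegral.integral_sub ((hU _).intervalIntegrable _ _)
            ((hU r).intervalIntegrable _ _)]
        rfl

lemma integral_integral_discreteJacobian (hu : Continuous u) (hv : Continuous v)
    (hu_per : ∀ r, Function.Periodic (fun θ => u (r, θ)) T)
    (hv_per : ∀ r, Function.Periodic (fun θ => v (r, θ)) T)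
    (hu_ge : ∀ r θ, b ≤ r → u (r, θ) = u (b, θ)) (hv_ge : ∀ r θ, b ≤ r → v (r, θ) = v (b, θ))
    {v₀ : ℝ} (hv_le : ∀ r θ, r ≤ a → v (r, θ) = v₀) (hh : 0 ≤ h) (ha' : a' + h ≤ a) :
    ∫ r in a'..b, ∫ θ in c..c + T, discreteJacobian u v h (r, θ) =
      h * discreteCircleIntegral u v h c T b := by
  have hG := continuous_discreteCircleIntegral (h := h) (c := c) (T := T) hu hv
  set G := discreteCircleIntegral u v h c T with hG_def
  have hG_int : ∀ s t, IntervalIntegrable G volume s t := hG.intervalIntegrable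
  have hG_shift : Continuous fun r => G (r + h) := by fun_prop
  have hlower : ∫ r in a'..a' + h, G r = 0 := by
    rw [intervalIntegral.integral_congr (g := fun _ => 0), intervalIntegral.integral_zero]
    intro r hr
    rw [uIcc_of_le (by linarith)] at hr
    have hra : r ≤ a := hr.2.trans ha'
    simp [hG_def, discreteCircleIntegral, hv_le r _ hra]
  have hupper : ∫ r in b..b + h, G r = h * G b := by
    rw [intervalIntegral.integral_congr (g := fun _ => G b), intervalIntegral.integral_const,
      add_sub_cancel_left, smul_eq_mul]
    intro r hr
    rw [uIcc_of_le (by linarith)] at hr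
    simp only [hG_def, discreteCircleIntegral, hu_ge r _ hr.1, hv_ge r _ hr.1]
  calc ∫ r in a'..b, ∫ θ in c..c + T, discreteJacobian u v h (r, θ)
      = ∫ r in a'..b, (G (r + h) - G r) := by
        simp only [integral_discreteJacobian_eq_sub hu hv hu_per hv_per, G]
    _ = (∫ r in a' + h..b + h, G r) - ∫ r in a'..b, G r := by
        rw [intervalIntegral.integral_sub (hG_shift.intervalIntegrable _ _) (hG_int _ _),
          intervalIntegral.integral_comp_add_right]
    _ = (∫ r in b..b + h, G r) - ∫ r in a'..a' + h, G r := by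
        rw [← intervalIntegral.integral_add_adjacent_intervals (hG_int a' (a' + h)) (hG_int _ b),
          ← intervalIntegral.integral_add_adjacent_intervals (hG_int (a' + h) b) (hG_int b (b + h))]
        ring
    _ = h * G b := by rw [hlower, hupper, sub_zero]

lemma abs_discreteJacobian_div_le (hu : LipschitzWith Ku u) (hv : LipschitzWith Kv v)
    (hh : 0 < h) (x : ℝ × ℝ) : |discreteJacobian u v h x / h ^ 2| ≤ 2 * Ku * Kv := by
  have increment : ∀ {f : ℝ × ℝ → ℝ} {K : ℝ≥0}, LipschitzWith K f → ∀ p q : ℝ × ℝ,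
      dist p q ≤ h → |f p - f q| ≤ K * h := fun hf p q hpq =>
    (hf.dist_le_mul p q).trans (by gcongr)
  have hdist₁ : ∀ r θ : ℝ, dist (r + h, θ) (r, θ) ≤ h := fun r θ => by
    simp [Prod.dist_eq, abs_of_pos hh, hh.le]
  have hdist₂ : ∀ r θ : ℝ, dist (r, θ + h) (r, θ) ≤ h := fun r θ => by
    simp [Prod.dist_eq, abs_of_pos hh, hh.le]
  rw [abs_div, abs_of_pos (pow_pos hh 2), div_le_iff₀ (pow_pos hh 2)]
  calc |discreteJacobian u v h x|
      ≤ |u (x.1 + h, x.2) - u x| * |v (x.1 + h, x.2 + h) - v (x.1 + h, x.2)| +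
        |u (x.1, x.2 + h) - u x| * |v (x.1 + h, x.2 + h) - v (x.1, x.2 + h)| := by
        rw [← abs_mul, ← abs_mul]
        exact abs_sub _ _
    _ ≤ Ku * h * (Kv * h) + Ku * h * (Kv * h) := by
        gcongr
        exacts [increment hu _ _ (hdist₁ _ _), increment hv _ _ (hdist₂ _ _),
          increment hu _ _ (hdist₂ _ _), increment hv _ _ (hdist₁ _ _)]
    _ = 2 * Ku * Kv * h ^ 2 := by ring

lemma tendsto_discreteJacobian_div (hu : DifferentiableAt ℝ u x) (hv : DifferentiableAt ℝ v x) :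
    Tendsto (fun h => discreteJacobian u v h x / h ^ 2) (𝓝[>] 0) (𝓝 (jacobianDet u v x)) := by
  have slope : ∀ {f : ℝ × ℝ → ℝ}, DifferentiableAt ℝ f x → ∀ w : ℝ × ℝ,
      Tendsto (fun h : ℝ => h⁻¹ • (f (x + h • w) - f x)) (𝓝[>] 0) (𝓝 (fderiv ℝ f x w)) :=
    fun hf w => (hf.hasFDerivAt.hasLineDerivAt w).tendsto_slope_zero_right
  have hlim := ((slope hu (1, 0)).mul ((slope hv (1, 1)).sub (slope hv (1, 0)))).sub
    ((slope hu (0, 1)).mul ((slope hv (1, 1)).sub (slope hv (0, 1))))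
  have hdiag : fderiv ℝ v x (1, 1) = fderiv ℝ v x (1, 0) + fderiv ℝ v x (0, 1) := by
    rw [← map_add, Prod.mk_add_mk, add_zero, zero_add]
  rw [hdiag, add_sub_cancel_left, add_sub_cancel_right] at hlim
  refine hlim.congr' ?_
  filter_upwards [self_mem_nhdsWithin] with h (hh : 0 < h)
  obtain ⟨r, θ⟩ := x
  simp only [discreteJacobian, Prod.smul_mk, smul_eq_mul, mul_one, mul_zero, Prod.mk_add_mk,
    add_zero]
  field_simp
  ring

lemma tendsto_setIntegral_discreteJacobian_div (hu : LipschitzWith Ku u)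
    (hv : LipschitzWith Kv v) {B : Set (ℝ × ℝ)} (hB : volume B ≠ ⊤) :
    Tendsto (fun h => ∫ x in B, discreteJacobian u v h x / h ^ 2) (𝓝[>] 0)
      (𝓝 (∫ x in B, jacobianDet u v x)) := by
  refine tendsto_integral_filter_of_dominated_convergence (fun _ => 2 * (Ku : ℝ) * Kv)
    (.of_forall fun h => ?_) ?_ (integrableOn_const hB) (ae_restrict_of_ae ?_)
  · exact ((continuous_discreteJacobian hu.continuous hv.continuous).div_const _)
      |>.aestronglyMeasurable
  · filter_upwards [self_mem_nhdsWithin] with h hh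
    exact .of_forall (abs_discreteJacobian_div_le hu hv hh)
  · filter_upwards [hu.ae_differentiableAt, hv.ae_differentiableAt] with x hux hvx
    exact tendsto_discreteJacobian_div hux hvx

lemma tendsto_discreteCircleIntegral_div (hu : Continuous u) (hv : LipschitzWith Kv v) (r : ℝ) :
    Tendsto (fun h => discreteCircleIntegral u v h c T r / h) (𝓝[>] 0)
      (𝓝 (∫ θ in c..c + T, u (r, θ) * deriv (fun t => v (r, t)) θ)) := by
  have hvr : LipschitzWith Kv fun t => v (r, t) :=
    (hv.comp (LipschitzWith.prodMk_left r)).weaken (mul_one Kv).le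
  have hv' := hv.continuous
  simp only [discreteCircleIntegral, ← intervalIntegral.integral_div]
  refine intervalIntegral.tendsto_integral_filter_of_dominated_convergence
    (fun θ => |u (r, θ)| * Kv) (.of_forall fun h => ?_) ?_
    (Continuous.intervalIntegrable (by fun_prop) _ _) ?_
  · exact Continuous.aestronglyMeasurable (by fun_prop)
  · filter_upwards [self_mem_nhdsWithin] with h (hh : 0 < h)
    refine .of_forall fun θ _ => ?_
    rw [mul_div_assoc, norm_mul, norm_div, Real.norm_eq_abs, Real.norm_of_nonneg hh.le]
    gcongr
    rw [div_le_iff₀ hh]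
    simpa [Real.dist_eq, abs_of_pos hh] using hvr.dist_le_mul (θ + h) θ
  · filter_upwards [hvr.ae_differentiableAt] with θ hθ _
    simpa only [smul_eq_mul, mul_div_assoc, inv_mul_eq_div] using
      hθ.hasDerivAt.tendsto_slope_zero_right.const_mul (u (r, θ))

lemma jacobianDet_eq_zero {v₀ : ℝ} (hv_le : ∀ r θ, r ≤ a → v (r, θ) = v₀) (hx : x.1 < a) :
    jacobianDet u v x = 0 := by
  have hconst : v =ᶠ[𝓝 x] fun _ => v₀ := by
    filter_upwards [continuous_fst.continuousAt.eventually_lt_const hx] with y hy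
    exact hv_le y.1 y.2 hy.le
  simp [jacobianDet, hconst.fderiv_eq]

theorem setIntegral_jacobianDet (hu : LipschitzWith Ku u) (hv : LipschitzWith Kv v)
    (hab : a ≤ b) (hT : 0 ≤ T) (hu_per : ∀ r, Function.Periodic (fun θ => u (r, θ)) T)
    (hv_per : ∀ r, Function.Periodic (fun θ => v (r, θ)) T)
    (hu_ge : ∀ r θ, b ≤ r → u (r, θ) = u (b, θ)) (hv_ge : ∀ r θ, b ≤ r → v (r, θ) = v (b, θ))
    {v₀ : ℝ} (hv_le : ∀ r θ, r ≤ a → v (r, θ) = v₀) :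
    ∫ x in Ioc a b ×ˢ Ioc c (c + T), jacobianDet u v x =
      ∫ θ in c..c + T, u (b, θ) * deriv (fun t => v (b, t)) θ := by
  have hB : Ioc (a - 1) b ×ˢ Ioc c (c + T) ⊆ Icc (a - 1) b ×ˢ Icc c (c + T) :=
    prod_mono Ioc_subset_Icc_self Ioc_subset_Icc_self
  have hcompact : IsCompact (Icc (a - 1) b ×ˢ Icc c (c + T)) := isCompact_Icc.prod isCompact_Icc
  have hdiscrete : ∀ h ∈ Ioc (0 : ℝ) 1,
      ∫ x in Ioc (a - 1) b ×ˢ Ioc c (c + T), discreteJacobian u v h x / h ^ 2 =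
        discreteCircleIntegral u v h c T b / h := by
    rintro h ⟨hh, hh1⟩
    have hcont := continuous_discreteJacobian (h := h) hu.continuous hv.continuous
    rw [integral_div, Measure.volume_eq_prod, setIntegral_prod _
      ((hcont.continuousOn.integrableOn_compact hcompact).mono_set hB)]
    simp only [← intervalIntegral.integral_of_le (show a - 1 ≤ b by linarith),
      ← intervalIntegral.integral_of_le (le_add_of_nonneg_right hT)]
    rw [integral_integral_discreteJacobian hu.continuous hv.continuous hu_per hv_per hu_ge hv_ge
      hv_le hh.le (by linarith)]
    field_simp
  have hlim : ∫ x in Ioc (a - 1) b ×ˢ Ioc c (c + T), jacobianDet u v x =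
      ∫ θ in c..c + T, u (b, θ) * deriv (fun t => v (b, t)) θ := by
    refine tendsto_nhds_unique (tendsto_setIntegral_discreteJacobian_div hu hv
      ((measure_mono hB).trans_lt hcompact.measure_lt_top).ne)
      ((tendsto_discreteCircleIntegral_div hu.continuous hv b).congr' ?_)
    filter_upwards [Ioc_mem_nhdsGT one_pos] with h hh using (hdiscrete h hh).symm
  rw [← hlim]
  refine (setIntegral_eq_of_subset_of_ae_sdiff_eq_zero
    (measurableSet_Ioc.prod measurableSet_Ioc).nullMeasurableSet
    (prod_mono_left (Ioc_subset_Ioc_left (by linarith))) ?_).symm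
  filter_upwards [Measure.quasiMeasurePreserving_fst.ae (Measure.ae_ne volume a)] with x hxa hx
  refine jacobianDet_eq_zero hv_le (lt_of_le_of_ne (le_of_not_gt fun hax => hx.2 ?_) hxa)
  exact ⟨⟨hax, hx.1.1.2⟩, hx.1.2⟩

end Stokes

/-! ### Metric derivatives and Jacobians -/

section MetricDerivative

variable {E : Type*} [PseudoMetricSpace E] {φ : ℝ × ℝ → E} {K : ℝ≥0} {s : Set (ℝ × ℝ)}
  {x v : ℝ × ℝ} {c : ℝ}

lemma eventually_add_smul_mem (hs : s ∈ 𝓝 x) (v : ℝ × ℝ) :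
    ∀ᶠ r : ℝ in 𝓝[>] 0, x + r • v ∈ s := by
  have hcont : ContinuousAt (fun r : ℝ => x + r • v) 0 := by fun_prop
  exact (hcont.eventually_mem (by simpa using hs)).filter_mono nhdsWithin_le_nhds

lemma eventually_dist_div_le (hφ : LipschitzOnWith K φ s) (hs : s ∈ 𝓝 x) (v : ℝ × ℝ) :
    ∀ᶠ r : ℝ in 𝓝[>] 0, dist (φ (x + r • v)) (φ x) / r ≤ K * ‖v‖ := by
  filter_upwards [eventually_add_smul_mem hs v, self_mem_nhdsWithin] with r hr (hr0 : 0 < r)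
  rw [div_le_iff₀ hr0]
  refine (hφ.dist_le_mul _ hr _ (mem_of_mem_nhds hs)).trans_eq ?_
  rw [dist_eq_norm, add_sub_cancel_left, norm_smul, Real.norm_of_nonneg hr0.le]
  ring

lemma mder_le_of_eventually_le (h : ∀ᶠ r : ℝ in 𝓝[>] 0, dist (φ (x + r • v)) (φ x) / r ≤ c) :
    mder φ x v ≤ c := by
  refine limsup_le_of_le (isCoboundedUnder_le_of_eventually_le _ (x := 0) ?_) h
  filter_upwards [self_mem_nhdsWithin] with r (hr : 0 < r)
  positivity

lemma mder_le (hφ : LipschitzOnWith K φ s) (hs : s ∈ 𝓝 x) (v : ℝ × ℝ) :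
    mder φ x v ≤ K * ‖v‖ :=
  mder_le_of_eventually_le (eventually_dist_div_le hφ hs v)

lemma eventually_dist_div_lt_of_mder_lt (hφ : LipschitzOnWith K φ s) (hs : s ∈ 𝓝 x)
    (hc : mder φ x v < c) : ∀ᶠ r : ℝ in 𝓝[>] 0, dist (φ (x + r • v)) (φ x) / r < c :=
  eventually_lt_of_limsup_lt hc (isBoundedUnder_of_eventually_le (eventually_dist_div_le hφ hs v))

lemma abs_fderiv_comp_le_mder {f : E → ℝ} (hf : LipschitzWith 1 f) (hφ : LipschitzOnWith K φ s)
    (hs : s ∈ 𝓝 x) (hd : DifferentiableAt ℝ (f ∘ φ) x) (w : ℝ × ℝ) :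
    |fderiv ℝ (f ∘ φ) x w| ≤ mder φ x w := by
  refine le_of_forall_gt_imp_ge_of_dense fun c hc => ?_
  refine le_of_tendsto (hd.hasFDerivAt.hasLineDerivAt w).tendsto_slope_zero_right.abs ?_
  filter_upwards [eventually_dist_div_lt_of_mder_lt hφ hs hc, self_mem_nhdsWithin]
    with r hr (hr0 : 0 < r)
  rw [smul_eq_mul, abs_mul, abs_inv, abs_of_pos hr0, inv_mul_eq_div]
  refine le_trans ?_ hr.le
  gcongr
  simpa [Real.dist_eq] using hf.dist_le_mul (φ (x + r • w)) (φ x)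

lemma mder_comp_le (hφ : LipschitzOnWith K φ s) {Q : ℝ × ℝ → ℝ × ℝ} {A : ℝ × ℝ →L[ℝ] ℝ × ℝ}
    (hQ : HasFDerivAt Q A x) (hs : s ∈ 𝓝 (Q x)) (w : ℝ × ℝ) :
    mder (φ ∘ Q) x w ≤ mder φ (Q x) (A w) := by
  refine le_of_forall_gt_imp_ge_of_dense fun c hc => mder_le_of_eventually_le ?_
  obtain ⟨c', hc', hc'c⟩ := exists_between hc
  have hslope : ∀ᶠ r : ℝ in 𝓝[>] 0, c' + K * ‖r⁻¹ • (Q (x + r • w) - Q x) - A w‖ < c := by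
    have hlim := ((((hQ.hasLineDerivAt w).tendsto_slope_zero_right.sub_const
      (A w)).norm.const_mul (K : ℝ)).const_add c')
    rw [sub_self, norm_zero, mul_zero, add_zero] at hlim
    exact hlim.eventually_lt_const hc'c
  have hmem : ∀ᶠ r : ℝ in 𝓝[>] 0, Q (x + r • w) ∈ s :=
    eventually_add_smul_mem (hQ.continuousAt.preimage_mem_nhds hs) w
  filter_upwards [eventually_dist_div_lt_of_mder_lt hφ hs hc',
    eventually_add_smul_mem hs (A w), hmem, hslope, self_mem_nhdsWithin]
    with r hr hr_line hr_mem hr_slope (hr0 : 0 < r)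
  refine le_trans ?_ hr_slope.le
  have hdist : dist (Q (x + r • w)) (Q x + r • A w) =
      ‖r⁻¹ • (Q (x + r • w) - Q x) - A w‖ * r := by
    have hsmul : Q (x + r • w) - (Q x + r • A w) =
        r • (r⁻¹ • (Q (x + r • w) - Q x) - A w) := by
      rw [smul_sub, smul_inv_smul₀ hr0.ne', sub_add_eq_sub_sub]
    rw [dist_eq_norm, hsmul, norm_smul, Real.norm_of_nonneg hr0.le, mul_comm]
  rw [div_le_iff₀ hr0]
  calc dist (φ (Q (x + r • w))) (φ (Q x))
      ≤ dist (φ (Q (x + r • w))) (φ (Q x + r • A w)) + dist (φ (Q x + r • A w)) (φ (Q x)) :=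
        dist_triangle _ _ _
    _ ≤ K * (‖r⁻¹ • (Q (x + r • w) - Q x) - A w‖ * r) + c' * r :=
        add_le_add (hdist ▸ hφ.dist_le_mul _ hr_mem _ hr_line) ((div_lt_iff₀ hr0).1 hr).le
    _ = (c' + K * ‖r⁻¹ • (Q (x + r • w) - Q x) - A w‖) * r := by ring

lemma mder_le_one_iff (hφ : LipschitzOnWith K φ s) (hs : s ∈ 𝓝 x) :
    mder φ x v ≤ 1 ↔ ∀ k : ℕ, ∃ n : ℕ, ∀ r ∈ Ioo (0 : ℝ) (1 / (n + 1)),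
      x + r • v ∈ s ∧ dist (φ (x + r • v)) (φ x) ≤ (1 + 1 / (k + 1)) * r := by
  constructor
  · intro h k
    have hk : mder φ x v < 1 + 1 / (k + 1) := h.trans_lt (lt_add_of_pos_right _ (by positivity))
    obtain ⟨e, he, hsub⟩ := mem_nhdsGT_iff_exists_Ioo_subset.1
      ((eventually_add_smul_mem hs v).and (eventually_dist_div_lt_of_mder_lt hφ hs hk))
    obtain ⟨n, hn⟩ := exists_nat_one_div_lt (mem_Ioi.1 he)
    refine ⟨n, fun r hr => ?_⟩
    obtain ⟨hmem, hlt⟩ := hsub ⟨hr.1, hr.2.trans hn⟩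
    exact ⟨hmem, ((div_lt_iff₀ hr.1).1 hlt).le⟩
  · intro h
    refine le_of_forall_pos_le_add fun ε hε => mder_le_of_eventually_le ?_
    obtain ⟨k, hk⟩ := exists_nat_one_div_lt hε
    obtain ⟨n, hn⟩ := h k
    filter_upwards [Ioo_mem_nhdsGT (show (0 : ℝ) < 1 / (n + 1) by positivity)] with r hr
    rw [div_le_iff₀ hr.1]
    refine (hn r hr).2.trans ?_
    have := hr.1
    gcongr

lemma measurableSet_mder_le_one (hφ : LipschitzOnWith K φ s) (hs : IsClosed s) :
    MeasurableSet {q : (ℝ × ℝ) × (ℝ × ℝ) | q.1 ∈ interior s ∧ mder φ q.1 q.2 ≤ 1} := by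
  let F : ℕ → ℝ → Set ((ℝ × ℝ) × (ℝ × ℝ)) := fun k r =>
    {q | (q.1 ∈ s ∧ q.1 + r • q.2 ∈ s) ∧
      dist (φ (q.1 + r • q.2)) (φ q.1) ≤ (1 + 1 / (k + 1)) * r}
  have hF : ∀ k r, IsClosed (F k r) := fun k r => by
    let S : Set ((ℝ × ℝ) × (ℝ × ℝ)) := {q | q.1 ∈ s ∧ q.1 + r • q.2 ∈ s}
    have hS : IsClosed S := (hs.preimage continuous_fst).inter (hs.preimage (by fun_prop))
    have hφ₁ : ContinuousOn (fun q => φ q.1) S :=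
      hφ.continuousOn.comp (by fun_prop) fun q hq => hq.1
    have hφ₂ : ContinuousOn (fun q => φ (q.1 + r • q.2)) S :=
      hφ.continuousOn.comp (by fun_prop) fun q hq => hq.2
    have hdist := continuous_dist.comp_continuousOn (hφ₂.prodMk hφ₁)
    exact hdist.preimage_isClosed_of_isClosed hS isClosed_Iic
  have heq : {q : (ℝ × ℝ) × (ℝ × ℝ) | q.1 ∈ interior s ∧ mder φ q.1 q.2 ≤ 1} =
      Prod.fst ⁻¹' interior s ∩
        ⋂ k : ℕ, ⋃ n : ℕ, ⋂ r ∈ Ioo (0 : ℝ) (1 / (n + 1)), F k r := by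
    ext q
    simp only [mem_ofPred_eq, mem_inter_iff, mem_preimage, mem_iInter, mem_iUnion, F]
    refine and_congr_right fun hq => ?_
    rw [mder_le_one_iff hφ (mem_interior_iff_mem_nhds.1 hq)]
    simp only [interior_subset hq, true_and]
  rw [heq]
  exact (isOpen_interior.measurableSet.preimage measurable_fst).inter <|
    .iInter fun k => .iUnion fun n => (isClosed_biInter fun r _ => hF k r).measurableSet

end MetricDerivative

section Jacobian

variable {s t : ℝ × ℝ → ℝ} {C : ℝ}

/-- When the sublevel set has infinite measure, both sides are `0`. -/
lemma jac2_eq_div (s : ℝ × ℝ → ℝ) : jac2 s = π / volume.real {v | s v ≤ 1} := by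
  unfold jac2
  split_ifs with h
  · rfl
  · simp [Measure.real, not_lt_top_iff.1 h]

lemma jac2_nonneg (s : ℝ × ℝ → ℝ) : 0 ≤ jac2 s := by
  rw [jac2_eq_div]
  positivity

lemma jac2_mono (hst : ∀ v, s v ≤ t v) (ht : 0 < volume {v | t v ≤ 1}) : jac2 s ≤ jac2 t := by
  by_cases hs : volume {v | s v ≤ 1} = ⊤
  · rw [jac2, if_neg (by simp [hs])]
    exact jac2_nonneg t
  · have hsub : {v | t v ≤ 1} ⊆ {v | s v ≤ 1} := fun v hv => (hst v).trans hv
    have htop : volume {v | t v ≤ 1} ≠ ⊤ := measure_ne_top_of_subset hsub hs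
    rw [jac2_eq_div, jac2_eq_div]
    exact div_le_div_of_nonneg_left Real.pi_pos.le (ENNReal.toReal_pos ht.ne' htop)
      (measureReal_mono hsub hs)

lemma jac2_comp {A : ℝ × ℝ →L[ℝ] ℝ × ℝ} (hA : A.det ≠ 0) (s : ℝ × ℝ → ℝ) :
    jac2 (s ∘ A) = |A.det| * jac2 s := by
  have hvol : volume.real {v | (s ∘ A) v ≤ 1} = |A.det|⁻¹ * volume.real {v | s v ≤ 1} := by
    have := Measure.addHaar_preimage_continuousLinearMap volume hA {v | s v ≤ 1}
    rw [measureReal_def, measureReal_def, ← abs_inv, ← ENNReal.toReal_ofReal (abs_nonneg _),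
      ← ENNReal.toReal_mul]
    exact congrArg _ this
  rw [jac2_eq_div, jac2_eq_div, hvol]
  field_simp

lemma setOf_mul_norm_le_one (hC : 0 < C) :
    {v : ℝ × ℝ | C * ‖v‖ ≤ 1} = closedBall (0 : ℝ) C⁻¹ ×ˢ closedBall (0 : ℝ) C⁻¹ := by
  ext v
  rw [closedBall_prod_same, Prod.mk_zero_zero, mem_closedBall_zero_iff, mem_ofPred_eq, mul_comm,
    ← le_div_iff₀ hC, one_div]

lemma jac2_mul_norm (hC : 0 < C) : jac2 (fun v => C * ‖v‖) = π / 4 * C ^ 2 := by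
  rw [jac2_eq_div, setOf_mul_norm_le_one hC, Measure.volume_eq_prod, measureReal_prod_prod,
    Real.volume_real_closedBall (by positivity)]
  field_simp
  norm_num

lemma volume_setOf_le_one_pos (hC : 0 < C) (hs : ∀ v, s v ≤ C * ‖v‖) :
    0 < volume {v | s v ≤ 1} := by
  have hsub : {v : ℝ × ℝ | C * ‖v‖ ≤ 1} ⊆ {v | s v ≤ 1} := fun v hv => (hs v).trans hv
  refine lt_of_lt_of_le ?_ (measure_mono hsub)
  rw [setOf_mul_norm_le_one hC, closedBall_prod_same]
  exact measure_closedBall_pos _ _ (by positivity)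

/-- The supremum norm on `ℝ²` has Jacobian `π / 4`. -/
lemma abs_det_prod_le_jac2 {a b : ℝ × ℝ →L[ℝ] ℝ} (ha : ∀ w, |a w| ≤ s w) (hb : ∀ w, |b w| ≤ s w)
    (hs : 0 < volume {v | s v ≤ 1}) : |(a.prod b).det| ≤ 4 / π * jac2 s := by
  by_cases hdet : (a.prod b).det = 0
  · rw [hdet, abs_zero]
    have := jac2_nonneg s
    positivity
  · have hle := jac2_mono (s := (fun v => 1 * ‖v‖) ∘ a.prod b)
      (fun v => by simpa using ⟨ha v, hb v⟩) hs
    rw [jac2_comp hdet, jac2_mul_norm one_pos] at hle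
    field_simp at hle ⊢
    linarith

lemma jacobianDet_eq_det (u v : ℝ × ℝ → ℝ) (x : ℝ × ℝ) :
    jacobianDet u v x = ((fderiv ℝ u x).prod (fderiv ℝ v x)).det := by
  rw [ContinuousLinearMap.det, ← LinearMap.det_toMatrix (Module.Basis.finTwoProd ℝ),
    Matrix.det_fin_two]
  simp [LinearMap.toMatrix_apply, jacobianDet]

variable {E : Type*} [PseudoMetricSpace E] {φ : ℝ × ℝ → E} {K : ℝ≥0} {D : Set (ℝ × ℝ)}
  {x : ℝ × ℝ}

lemma mder_le_add_one_mul (hφ : LipschitzOnWith K φ D) (hD : D ∈ 𝓝 x) (v : ℝ × ℝ) :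
    mder φ x v ≤ (K + 1) * ‖v‖ :=
  (mder_le hφ hD v).trans (by gcongr; exact le_add_of_nonneg_right zero_le_one)

lemma volume_mder_le_one_pos (hφ : LipschitzOnWith K φ D) (hD : D ∈ 𝓝 x) :
    0 < volume {v | mder φ x v ≤ 1} :=
  volume_setOf_le_one_pos (by positivity) (mder_le_add_one_mul hφ hD)

lemma jac2_mder_le (hφ : LipschitzOnWith K φ D) (hD : D ∈ 𝓝 x) :
    jac2 (mder φ x) ≤ π / 4 * (K + 1) ^ 2 := by
  rw [← jac2_mul_norm (by positivity)]
  exact jac2_mono (mder_le_add_one_mul hφ hD)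
    (volume_setOf_le_one_pos (by positivity) fun v => le_rfl)

lemma jac2_mder_comp_le (hφ : LipschitzOnWith K φ D) {Q : ℝ × ℝ → ℝ × ℝ}
    {A : ℝ × ℝ →L[ℝ] ℝ × ℝ} (hQ : HasFDerivAt Q A x) (hD : D ∈ 𝓝 (Q x)) (hA : A.det ≠ 0) :
    jac2 (mder (φ ∘ Q) x) ≤ |A.det| * jac2 (mder φ (Q x)) := by
  rw [← jac2_comp hA]
  refine jac2_mono (mder_comp_le hφ hQ hD) ?_
  have := Measure.addHaar_preimage_continuousLinearMap volume hA {v | mder φ (Q x) v ≤ 1}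
  refine this.symm ▸ ENNReal.mul_pos ?_ (volume_mder_le_one_pos hφ hD).ne'
  simpa using hA

/-- Gromov's calibration: a pair of `1`-Lipschitz functions is a `1`-Lipschitz map to `ℝ²` with the
supremum norm. -/
lemma abs_jacobianDet_comp_le (hφ : LipschitzOnWith K φ D) (hD : D ∈ 𝓝 x) {f g : E → ℝ}
    (hf : LipschitzWith 1 f) (hg : LipschitzWith 1 g) (hfφ : DifferentiableAt ℝ (f ∘ φ) x)
    (hgφ : DifferentiableAt ℝ (g ∘ φ) x) :
    |jacobianDet (f ∘ φ) (g ∘ φ) x| ≤ 4 / π * jac2 (mder φ x) := by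
  rw [jacobianDet_eq_det]
  exact abs_det_prod_le_jac2 (abs_fderiv_comp_le_mder hf hφ hD hfφ)
    (abs_fderiv_comp_le_mder hg hφ hD hgφ) (volume_mder_le_one_pos hφ hD)

lemma integrableOn_jac2_mder (hφ : LipschitzOnWith K φ D) (hD : IsClosed D)
    (hD_fin : volume D ≠ ⊤) : IntegrableOn (fun x => jac2 (mder φ x)) (interior D) := by
  let G := {q : (ℝ × ℝ) × (ℝ × ℝ) | q.1 ∈ interior D ∧ mder φ q.1 q.2 ≤ 1}
  have hmeas : Measurable fun x => π / volume.real (Prod.mk x ⁻¹' G) :=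
    (measurable_measure_prodMk_left (measurableSet_mder_le_one hφ hD)).ennreal_toReal.const_div _
  have hint : volume (interior D) ≠ ⊤ := measure_ne_top_of_subset interior_subset hD_fin
  have hmem := ae_restrict_mem (μ := volume) (isOpen_interior (s := D)).measurableSet
  refine IntegrableOn.of_bound hint.lt_top (hmeas.aestronglyMeasurable.congr ?_)
    (π / 4 * (K + 1) ^ 2) ?_
  · filter_upwards [hmem] with x hx
    have hslice : Prod.mk x ⁻¹' G = {v | mder φ x v ≤ 1} := by
      ext v
      simp [G, hx]
    rw [hslice, jac2_eq_div]
  · filter_upwards [hmem] with x hx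
    rw [Real.norm_of_nonneg (jac2_nonneg _)]
    exact jac2_mder_le hφ (mem_interior_iff_mem_nhds.1 hx)

end Jacobian

/-! ### Calibrating the area of a disc by its boundary -/

section Disc

lemma isClosed_D2 : IsClosed D2 := isClosed_le (by fun_prop) (by fun_prop)

lemma convex_D2 : Convex ℝ D2 := by
  have hsq : ConvexOn ℝ univ fun x : ℝ => x ^ 2 := even_two.convexOn_pow
  simpa [D2] using ((hsq.comp_linearMap (LinearMap.fst ℝ ℝ ℝ)).add
    (hsq.comp_linearMap (LinearMap.snd ℝ ℝ ℝ))).convex_le 1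

lemma volume_D2_ne_top : volume D2 ≠ ⊤ := by
  have hsub : D2 ⊆ closedBall 0 1 := fun p (hp : p.1 ^ 2 + p.2 ^ 2 ≤ 1) => ?_
  · exact measure_ne_top_of_subset hsub measure_closedBall_lt_top.ne
  rw [mem_closedBall_zero_iff, Prod.norm_def, Real.norm_eq_abs, Real.norm_eq_abs, sup_le_iff,
    ← sq_le_one_iff_abs_le_one, ← sq_le_one_iff_abs_le_one]
  constructor <;> nlinarith

lemma interior_D2_ae_eq : interior D2 =ᵐ[volume] D2 :=
  interior_ae_eq_of_null_frontier (convex_D2.addHaar_frontier _)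

lemma mem_interior_D2 {p : ℝ × ℝ} (hp : p.1 ^ 2 + p.2 ^ 2 < 1) : p ∈ interior D2 :=
  interior_maximal (fun _ => le_of_lt)
    (isOpen_lt (by fun_prop : Continuous fun q : ℝ × ℝ => q.1 ^ 2 + q.2 ^ 2) continuous_const) hp

/-- Polar coordinates with the radius clamped to `[0, 1]`, a Lipschitz map of the plane onto `D2`
which is constant in the radial direction outside the strip `0 ≤ p.1 ≤ 1`. -/
noncomputable def clampedPolar (p : ℝ × ℝ) : ℝ × ℝ :=
  polarCoord.symm (projIcc 0 1 zero_le_one p.1, p.2)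

variable {p : ℝ × ℝ} {r : ℝ}

lemma polarCoord_symm_sq_add_sq (p : ℝ × ℝ) :
    (polarCoord.symm p).1 ^ 2 + (polarCoord.symm p).2 ^ 2 = p.1 ^ 2 := by
  rw [polarCoord_symm_apply, mul_pow, mul_pow, ← mul_add, Real.cos_sq_add_sin_sq, mul_one]

lemma clampedPolar_mem_D2 (p : ℝ × ℝ) : clampedPolar p ∈ D2 := by
  have hρ := (projIcc (0 : ℝ) 1 zero_le_one p.1).2
  exact (polarCoord_symm_sq_add_sq _).trans_le (pow_le_one₀ hρ.1 hρ.2)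

lemma clampedPolar_of_nonpos (hr : r ≤ 0) (θ : ℝ) : clampedPolar (r, θ) = 0 := by
  simp [clampedPolar, projIcc_of_le_left _ hr]

lemma clampedPolar_of_one_le (hr : 1 ≤ r) (θ : ℝ) :
    clampedPolar (r, θ) = (Real.cos θ, Real.sin θ) := by
  simp [clampedPolar, projIcc_of_right_le _ hr]

lemma periodic_clampedPolar (r : ℝ) :
    Function.Periodic (fun θ => clampedPolar (r, θ)) (2 * π) := fun θ => by
  simp [clampedPolar]

lemma lipschitzWith_projIcc_mul {w : ℝ → ℝ} (hw : LipschitzWith 1 w) (hw_le : ∀ θ, |w θ| ≤ 1) :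
    LipschitzWith 2 fun p : ℝ × ℝ => (projIcc 0 1 zero_le_one p.1 : ℝ) * w p.2 := by
  refine LipschitzWith.of_dist_le_mul fun p q => ?_
  have hclamp := (LipschitzWith.projIcc (zero_le_one' ℝ)).dist_le_mul p.1 q.1
  have hdist := hw.dist_le_mul p.2 q.2
  rw [NNReal.coe_one, one_mul] at hclamp hdist
  set ρ := projIcc (0 : ℝ) 1 zero_le_one p.1
  set σ := projIcc (0 : ℝ) 1 zero_le_one q.1
  calc dist (ρ * w p.2) (σ * w q.2) = |(ρ - σ : ℝ) * w p.2 + σ * (w p.2 - w q.2)| := by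
        rw [Real.dist_eq]
        congr 1
        ring
    _ ≤ |(ρ - σ : ℝ)| * |w p.2| + σ * |w p.2 - w q.2| := by
        rw [← abs_of_nonneg σ.2.1, ← abs_mul, ← abs_mul, abs_of_nonneg σ.2.1]
        exact abs_add_le _ _
    _ ≤ dist p q * 1 + 1 * dist p q := by
        gcongr
        exacts [hclamp.trans (le_max_left _ _), hw_le _, σ.2.2, hdist.trans (le_max_right _ _)]
    _ = 2 * dist p q := by ring

lemma lipschitzWith_clampedPolar : LipschitzWith 2 clampedPolar := by
  have hcos : LipschitzWith 1 Real.cos := LipschitzWith.of_dist_le_mul fun x y => by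
    simpa [Real.dist_eq] using Real.abs_cos_sub_cos_le x y
  have hsin : LipschitzWith 1 Real.sin := LipschitzWith.of_dist_le_mul fun x y => by
    simpa [Real.dist_eq] using Real.abs_sin_sub_sin_le x y
  exact max_self (2 : ℝ≥0) ▸ (lipschitzWith_projIcc_mul hcos Real.abs_cos_le_one).prodMk
    (lipschitzWith_projIcc_mul hsin Real.abs_sin_le_one)

lemma clampedPolar_eventuallyEq (hp : p.1 ∈ Ioo 0 1) : clampedPolar =ᶠ[𝓝 p] polarCoord.symm := by
  filter_upwards [continuous_fst.continuousAt (isOpen_Ioo.mem_nhds hp)] with q hq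
  rw [clampedPolar, projIcc_of_mem _ (Ioo_subset_Icc_self hq)]

lemma polarCoord_symm_mem_interior_D2 (hp : p.1 ∈ Ioo 0 1) :
    polarCoord.symm p ∈ interior D2 :=
  mem_interior_D2 ((polarCoord_symm_sq_add_sq p).trans_lt (pow_lt_one₀ hp.1.le hp.2 two_ne_zero))

variable {E : Type*} [PseudoMetricSpace E] {φ : ℝ × ℝ → E} {K : ℝ≥0} {f g : E → ℝ}

lemma integrableOn_and_integral_polar_le_lipArea (hφ : LipschitzOnWith K φ D2) :
    IntegrableOn (fun p => |(fderivPolarCoordSymm p).det| * jac2 (mder φ (polarCoord.symm p)))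
        (Ioo 0 1 ×ˢ Ioo (-π) π) ∧
      ∫ p in Ioo 0 1 ×ˢ Ioo (-π) π,
        |(fderivPolarCoordSymm p).det| * jac2 (mder φ (polarCoord.symm p)) ≤ lipArea φ := by
  set B : Set (ℝ × ℝ) := Ioo 0 1 ×ˢ Ioo (-π) π
  have hB : MeasurableSet B := measurableSet_Ioo.prod measurableSet_Ioo
  have hderiv : ∀ p ∈ B, HasFDerivWithinAt polarCoord.symm (fderivPolarCoordSymm p) B p :=
    fun p _ => (hasFDerivAt_polarCoord_symm p).hasFDerivWithinAt
  have hinj : InjOn polarCoord.symm B :=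
    polarCoord.symm.injOn.mono (prod_mono_left fun r hr => hr.1)
  have himage : polarCoord.symm '' B ⊆ interior D2 :=
    image_subset_iff.2 fun p hp => polarCoord_symm_mem_interior_D2 hp.1
  have hint := integrableOn_jac2_mder hφ isClosed_D2 volume_D2_ne_top
  refine ⟨(integrableOn_image_iff_integrableOn_abs_det_fderiv_smul volume hB hderiv hinj _).1
    (hint.mono_set himage), ?_⟩
  rw [lipArea, ← setIntegral_congr_set interior_D2_ae_eq]
  exact (integral_image_eq_integral_abs_det_fderiv_smul volume hB hderiv hinj
    fun x => jac2 (mder φ x)).symm.trans_le (setIntegral_mono_set hint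
      (.of_forall fun x => jac2_nonneg _) himage.eventuallyLE)

lemma lipschitzWith_comp_clampedPolar (hφ : LipschitzOnWith K φ D2) :
    LipschitzWith (K * 2) (φ ∘ clampedPolar) :=
  lipschitzOnWith_univ.1 (hφ.comp lipschitzWith_clampedPolar.lipschitzOnWith
    fun p _ => clampedPolar_mem_D2 p)

lemma abs_jacobianDet_comp_clampedPolar_le (hφ : LipschitzOnWith K φ D2) (hf : LipschitzWith 1 f)
    (hg : LipschitzWith 1 g) (hp : p.1 ∈ Ioo 0 1)
    (hfp : DifferentiableAt ℝ (f ∘ φ ∘ clampedPolar) p)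
    (hgp : DifferentiableAt ℝ (g ∘ φ ∘ clampedPolar) p) :
    |jacobianDet (f ∘ φ ∘ clampedPolar) (g ∘ φ ∘ clampedPolar) p| ≤
      4 / π * (|(fderivPolarCoordSymm p).det| * jac2 (mder φ (polarCoord.symm p))) := by
  have hpolar := clampedPolar_eventuallyEq hp
  have hmem : D2 ∈ 𝓝 (clampedPolar p) := by
    rw [hpolar.eq_of_nhds]
    exact mem_interior_iff_mem_nhds.1 (polarCoord_symm_mem_interior_D2 hp)
  have hdet : (fderivPolarCoordSymm p).det ≠ 0 := by
    rw [det_fderivPolarCoordSymm]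
    exact hp.1.ne'
  calc |jacobianDet (f ∘ φ ∘ clampedPolar) (g ∘ φ ∘ clampedPolar) p|
      ≤ 4 / π * jac2 (mder (φ ∘ clampedPolar) p) :=
        abs_jacobianDet_comp_le (lipschitzWith_comp_clampedPolar hφ).lipschitzOnWith univ_mem
          hf hg hfp hgp
    _ ≤ 4 / π * (|(fderivPolarCoordSymm p).det| * jac2 (mder φ (polarCoord.symm p))) := by
        rw [← hpolar.eq_of_nhds]
        gcongr
        exact jac2_mder_comp_le hφ
          ((hasFDerivAt_polarCoord_symm p).congr_of_eventuallyEq hpolar) hmem hdet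

lemma abs_setIntegral_jacobianDet_comp_clampedPolar_le (hφ : LipschitzOnWith K φ D2)
    (hf : LipschitzWith 1 f) (hg : LipschitzWith 1 g) :
    |∫ p in Ioo 0 1 ×ˢ Ioo (-π) π,
        jacobianDet (f ∘ φ ∘ clampedPolar) (g ∘ φ ∘ clampedPolar) p| ≤ 4 / π * lipArea φ := by
  have hψ := lipschitzWith_comp_clampedPolar hφ
  obtain ⟨hint, hle⟩ := integrableOn_and_integral_polar_le_lipArea hφ
  refine (abs_integral_le_integral_abs.trans (integral_mono_of_nonneg
    (.of_forall fun _ => abs_nonneg _) (hint.const_mul (4 / π)) ?_)).trans ?_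
  · filter_upwards [ae_restrict_mem (measurableSet_Ioo.prod measurableSet_Ioo),
      ae_restrict_of_ae (hf.comp hψ).ae_differentiableAt,
      ae_restrict_of_ae (hg.comp hψ).ae_differentiableAt] with p hp hfp hgp
    exact abs_jacobianDet_comp_clampedPolar_le hφ hf hg hp.1 hfp hgp
  · rw [integral_const_mul]
    gcongr

lemma periodic_mul_deriv {u v : ℝ → ℝ} {T : ℝ} (hu : Function.Periodic u T)
    (hv : Function.Periodic v T) : Function.Periodic (fun θ => u θ * deriv v θ) T := fun θ => by
  simp only [hu θ, ← deriv_comp_add_const, hv _]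

theorem abs_integral_circle_le_lipArea (hφ : LipschitzOnWith K φ D2) (hf : LipschitzWith 1 f)
    (hg : LipschitzWith 1 g) :
    |∫ θ in 0..2 * π, f (φ (Real.cos θ, Real.sin θ)) *
      deriv (fun t => g (φ (Real.cos t, Real.sin t))) θ| ≤ 4 / π * lipArea φ := by
  have hψ := lipschitzWith_comp_clampedPolar hφ
  have hper : ∀ (F : E → ℝ) (r : ℝ),
      Function.Periodic (fun θ => (F ∘ φ ∘ clampedPolar) (r, θ)) (2 * π) :=
    fun F r => (periodic_clampedPolar r).comp (F ∘ φ)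
  have hone : ∀ (F : E → ℝ) (r θ : ℝ), 1 ≤ r →
      (F ∘ φ ∘ clampedPolar) (r, θ) = (F ∘ φ ∘ clampedPolar) (1, θ) := fun F r θ hr => by
    simp only [Function.comp_apply, clampedPolar_of_one_le hr, clampedPolar_of_one_le le_rfl]
  have hzero : ∀ r θ : ℝ, r ≤ 0 → (g ∘ φ ∘ clampedPolar) (r, θ) = g (φ 0) := fun r θ hr => by
    simp only [Function.comp_apply, clampedPolar_of_nonpos hr]
  have hstokes := setIntegral_jacobianDet (c := -π) (hf.comp hψ) (hg.comp hψ) zero_le_one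
    Real.two_pi_pos.le (hper f) (hper g) (hone f) (hone g) hzero
  simp only [Function.comp_apply, clampedPolar_of_one_le le_rfl] at hstokes
  have hrect : (Ioo 0 1 ×ˢ Ioo (-π) π : Set (ℝ × ℝ)) =ᵐ[volume]
      Ioc 0 1 ×ˢ Ioc (-π) (-π + 2 * π) := by
    rw [show -π + 2 * π = π by ring]
    exact Measure.set_prod_ae_eq Ioo_ae_eq_Ioc Ioo_ae_eq_Ioc
  have hshift := (periodic_mul_deriv (T := 2 * π)
    (u := fun θ => f (φ (Real.cos θ, Real.sin θ))) (v := fun θ => g (φ (Real.cos θ, Real.sin θ)))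
    (fun θ => by simp) (fun θ => by simp)).intervalIntegral_add_eq 0 (-π)
  rw [zero_add] at hshift
  rw [hshift, ← hstokes, ← setIntegral_congr_set hrect]
  exact abs_setIntegral_jacobianDet_comp_clampedPolar_le hφ hf hg

theorem BoundsLoop.abs_integral_le_lipArea {γ : ℝ → E} (h : BoundsLoop φ γ)
    (hf : LipschitzWith 1 f) (hg : LipschitzWith 1 g) :
    |∫ s in 0..1, f (γ s) * deriv (g ∘ γ) s| ≤ 4 / π * lipArea φ := by
  obtain ⟨⟨K, hK⟩, hγ⟩ := h
  refine le_trans (le_of_eq ?_) (abs_integral_circle_le_lipArea hK hf hg)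
  have hγ' : ∀ s ∈ Ioo (0 : ℝ) 1,
      γ =ᶠ[𝓝 s] fun s => φ (Real.cos (2 * π * s), Real.sin (2 * π * s)) := fun s hs => by
    filter_upwards [isOpen_Ioo.mem_nhds hs] with t ht using (hγ t (Ioo_subset_Icc_self ht)).symm
  let w : ℝ → ℝ := fun θ => f (φ (Real.cos θ, Real.sin θ)) *
    deriv (fun t => g (φ (Real.cos t, Real.sin t))) θ
  have hw : ∫ s in 0..1, f (γ s) * deriv (g ∘ γ) s = ∫ s in 0..1, 2 * π * w (2 * π * s) := by
    refine intervalIntegral.integral_congr_Ioo_of_le zero_le_one fun s hs => ?_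
    have hderiv := ((hγ' s hs).fun_comp g).deriv_eq.trans
      (deriv_comp_mul_left (2 * π) (fun t => g (φ (Real.cos t, Real.sin t))) s)
    rw [hderiv, (hγ' s hs).eq_of_nhds, smul_eq_mul, mul_left_comm]
  rw [hw, intervalIntegral.integral_const_mul, intervalIntegral.mul_integral_comp_mul_left]
  simp [w]

end Disc

/-! ### Area of discs bounding fat loops -/

theorem integral_tent {r t L : ℝ} (hr : 0 ≤ r) (hrt : r ≤ t) (htL : t + r ≤ L) :
    ∫ y in 0..L, max (r - |y - t|) 0 = r ^ 2 := by
  have hsupp : Function.support (fun y => max (r - |y - t|) 0) ⊆ Ioc 0 L := fun y hy => by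
    have hlt : |y - t| < r := by
      by_contra! hle
      exact hy (max_eq_right (sub_nonpos.2 hle))
    rw [abs_lt] at hlt
    constructor <;> linarith
  have hright : ∫ y in Ioi 0, max (r - y) 0 = ∫ y in 0..r, (r - y) := by
    rw [intervalIntegral.integral_of_le hr]
    refine (setIntegral_eq_of_subset_of_forall_sdiff_eq_zero measurableSet_Ioi Ioc_subset_Ioi_self
      fun y hy => ?_).trans (setIntegral_congr_fun measurableSet_Ioc fun y hy => ?_)
    · exact max_eq_right (sub_nonpos.2 (not_le.1 fun hle => hy.2 ⟨hy.1, hle⟩).le)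
    · exact max_eq_left (sub_nonneg.2 hy.2)
  rw [intervalIntegral.integral_eq_integral_of_support_subset hsupp,
    integral_sub_right_eq_self (fun y => max (r - |y|) 0), integral_comp_abs
      (f := fun y => max (r - y) 0), hright,
    intervalIntegral.integral_comp_sub_left (fun y => y), integral_id]
  ring

lemma lipschitzWith_max_sub_dist {E : Type*} [PseudoMetricSpace E] (r : ℝ) (x : E) :
    LipschitzWith 1 fun y => max (r - dist y x) 0 := by
  simpa using ((LipschitzWith.const r).sub (LipschitzWith.dist_left x)).max_const 0

namespace IsFatLoop

variable {E : Type*} [PseudoMetricSpace E] {c : ℝ → E} {Λ l t r : ℝ}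

lemma max_mul_deriv_eq (h : IsFatLoop c Λ l t r) {y : ℝ} (hy : y ∈ Ioo 0 Λ) (hyl : y ≠ l) :
    max (r - dist (c y) (c t)) 0 * deriv (fun s => dist (c s) (c 0)) y =
      max (r - |y - t|) 0 := by
  obtain hyl | hly := hyl.lt_or_gt
  · have hderiv : (fun s => dist (c s) (c 0)) =ᶠ[𝓝 y] id := by
      filter_upwards [isOpen_Ioo.mem_nhds (⟨hy.1, hyl⟩ : y ∈ Ioo 0 l)] with s hs
      rw [h.dist_eq s ⟨hs.1.le, hs.2.le⟩ 0 ⟨le_rfl, h.length_nonneg⟩, sub_zero, abs_of_pos hs.1,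
        id]
    rw [hderiv.deriv_eq, deriv_id, mul_one, h.dist_eq y ⟨hy.1.le, hyl.le⟩ t h.mem_Icc]
  · have hdist := h.le_dist y ⟨hly.le, hy.2.le⟩
    have habs := h.time_add_le.trans hly.le
    rw [max_eq_right (sub_nonpos.2 hdist), zero_mul,
      max_eq_right (sub_nonpos.2 (le_abs.2 (.inl (le_sub_iff_add_le'.2 habs))))]

theorem integral_mul_deriv_eq (h : IsFatLoop c Λ l t r) (hr : 0 < r) :
    ∫ s in 0..1, max (r - dist (c (Λ * s)) (c t)) 0 *
      deriv (fun s => dist (c (Λ * s)) (c 0)) s = r ^ 2 := by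
  have hΛ : 0 < Λ := by linarith [h.le_time, h.time_add_le, h.le]
  have hcongr : ∀ᵐ s : ℝ, s ∈ Ι 0 1 → max (r - dist (c (Λ * s)) (c t)) 0 *
      deriv (fun s => dist (c (Λ * s)) (c 0)) s = Λ * max (r - |Λ * s - t|) 0 := by
    filter_upwards [Measure.ae_ne volume 1, Measure.ae_ne volume (l / Λ)] with s hs1 hsl hs
    rw [uIoc_of_le zero_le_one] at hs
    have hmem : Λ * s ∈ Ioo 0 Λ :=
      ⟨mul_pos hΛ hs.1, mul_lt_of_lt_one_right hΛ (hs.2.lt_of_ne hs1)⟩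
    have hne : Λ * s ≠ l := fun heq => hsl (eq_div_of_mul_eq hΛ.ne' (by rwa [mul_comm]))
    rw [deriv_comp_mul_left Λ (fun s => dist (c s) (c 0)), smul_eq_mul, mul_left_comm,
      h.max_mul_deriv_eq hmem hne]
  rw [intervalIntegral.integral_congr_ae hcongr, intervalIntegral.integral_const_mul,
    intervalIntegral.mul_integral_comp_mul_left (f := fun y => max (r - |y - t|) 0), mul_zero,
    mul_one]
  exact integral_tent hr.le h.le_time (h.time_add_le.trans h.le)

theorem pi_div_four_mul_sq_le_lipArea (h : IsFatLoop c Λ l t r) (hr : 0 < r) {φ : ℝ × ℝ → E}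
    (hφ : BoundsLoop φ fun s => c (Λ * s)) : π / 4 * r ^ 2 ≤ lipArea φ := by
  have hle := (le_abs_self _).trans <| hφ.abs_integral_le_lipArea
    (lipschitzWith_max_sub_dist r (c t)) (LipschitzWith.dist_left (c 0))
  rw [Function.comp_def, h.integral_mul_deriv_eq hr] at hle
  calc π / 4 * r ^ 2 ≤ π / 4 * (4 / π * lipArea φ) := by gcongr
    _ = lipArea φ := by field_simp

end IsFatLoop

lemma isometry_kuratowski {X : Type u} [MetricSpace X] (x₀ : X) : Isometry (kuratowski X x₀) := by
  refine Isometry.of_dist_eq fun x y => ?_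
  have hcoord : ∀ z, (kuratowski X x₀ x - kuratowski X x₀ y : Linfty X) z = dist x z - dist y z :=
    fun z => sub_sub_sub_cancel_right (dist x z) (dist y z) (dist x₀ z)
  rw [dist_eq_norm]
  refine le_antisymm (lp.norm_le_of_forall_le dist_nonneg fun z => ?_) ?_
  · rw [hcoord, Real.norm_eq_abs]
    exact abs_dist_sub_le x y z
  · have hy := lp.norm_apply_le_norm ENNReal.top_ne_zero
      (kuratowski X x₀ x - kuratowski X x₀ y : Linfty X) y
    rwa [hcoord, dist_self, sub_zero, Real.norm_eq_abs, abs_of_nonneg dist_nonneg] at hy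

theorem subquadratic_hyperbolic_general {X : Type u} [MetricSpace X] {Y : Type v}
    [PseudoMetricSpace Y] {ι : X → Y} (hι : Isometry ι) (hX : GeodesicSpace X) {ν s₀ : ℝ}
    (hν : ν < π / 10 ^ 4)
    (h : ∀ γ : ℝ → X, IsLipLoop γ → s₀ ≤ loopLength γ →
      ∃ φ : ℝ × ℝ → Y, BoundsLoop φ (fun s => ι (γ s)) ∧ lipArea φ ≤ ν * loopLength γ ^ 2) :
    GromovHyperbolic X := by
  by_contra hhyp
  obtain ⟨D, hD, hdetour⟩ := exists_hasDetour_of_not_gromovHyperbolic hX hhyp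
    (lt_max_of_lt_right one_pos : 0 < max s₀ 1)
  obtain ⟨hs₀, hD1⟩ := max_le_iff.1 hD
  obtain ⟨c, Λ, l, t, hΛ, hc⟩ := hdetour.exists_isFatLoop
  have hDpos : 0 < D := one_pos.trans_le hD1
  have hlen := hc.two_mul_le_loopLength hDpos
  obtain ⟨φ, hφ, harea⟩ := h _ hc.isLipLoop (by linarith)
  refine lt_irrefl (π / 4 * D ^ 2) ?_
  calc π / 4 * D ^ 2 ≤ lipArea φ := (hc.comp_isometry hι).pi_div_four_mul_sq_le_lipArea hDpos hφ
    _ ≤ ν * loopLength (fun s => c (Λ * s)) ^ 2 := harea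
    _ < π / 10 ^ 4 * loopLength (fun s => c (Λ * s)) ^ 2 := by
        gcongr
        exact pow_pos (by linarith) 2
    _ ≤ π / 10 ^ 4 * (50 * D) ^ 2 := by
        gcongr
        · linarith
        · exact hc.loopLength_le.trans hΛ
    _ = π / 4 * D ^ 2 := by ring

/-- Theorem 5.4: let `X` be a geodesic metric space (no
admissibility assumption).  If for every `ν > 0` there is `s₀ > 0` such that every
Lipschitz loop `γ` in `X` of length at least `s₀` bounds a singular Lipschitz disc of
area at most `ν·length(γ)²` in `L^∞(X)` (via the Kuratowski embedding), then `X`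
is Gromov hyperbolic. -/
theorem subquadratic_hyperbolic {X : Type u} [MetricSpace X] (x₀ : X)
    (hX : GeodesicSpace X)
    (h : ∀ ν > (0:ℝ), ∃ s₀ > (0:ℝ), ∀ γ : ℝ → X, IsLipLoop γ → s₀ ≤ loopLength γ →
      ∃ φ : ℝ × ℝ → Linfty X, BoundsLoop φ (fun s => kuratowski X x₀ (γ s)) ∧
        lipArea φ ≤ ν * (loopLength γ) ^ 2) :
    GromovHyperbolic X := by
  obtain ⟨s₀, -, h⟩ := h (1 / 10 ^ 4) (by positivity)
  have hν : 1 / 10 ^ 4 < π / 10 ^ 4 := by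
    gcongr
    linarith [Real.pi_gt_three]
  exact subquadratic_hyperbolic_general (isometry_kuratowski x₀) hX hν h

end SharpIsop
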